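/- arXiv:2105.01532 — 5 statements merged into one kernel-verified Lean document; each statement's English description precedes it below -/
import Mathlib

section
/- Let n ≥ 5 be odd. In Sym(2n), let G₁₂₃ = ⟨t₁, t₂, t₃⟩ with t₁ = ∏_{i=0}^{⌊(n-2)/2⌋}(1+2i,2+2i)(n+1+2i,n+2+2i), t₂ = ∏_{i=1}^{⌊(n-3)/2⌋}(2+2i,3+2i)(n+2+2i,n+3+2i), t₃ = (1,3)(2,4)(n+1,n+3)(n+2,n+4). Then for every 1 ≤ i < n, the permutation (i,i+1)(n+i,n+i+1) belongs to G₁₂₃. -/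
open Equiv

/-- `t₁ = ∏_{i=0}^{⌊(n-2)/2⌋} (1+2i, 2+2i)(n+1+2i, n+2+2i)` in `Sym(2n)` (as a
permutation of `ℕ`). -/
def t1 (n : ℕ) : Equiv.Perm ℕ :=
  ((List.range ((n - 2) / 2 + 1)).map
    (fun i => Equiv.swap (1 + 2*i) (2 + 2*i) * Equiv.swap (n+1+2*i) (n+2+2*i))).prod

/-- `t₂ = ∏_{i=1}^{⌊(n-3)/2⌋} (2+2i, 3+2i)(n+2+2i, n+3+2i)`. -/
def t2 (n : ℕ) : Equiv.Perm ℕ :=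
  ((List.range ((n - 3) / 2)).map
    (fun j => Equiv.swap (2 + 2*(j+1)) (3 + 2*(j+1)) *
      Equiv.swap (n+2+2*(j+1)) (n+3+2*(j+1)))).prod

/-- `t₃ = (1,3)(2,4)(n+1,n+3)(n+2,n+4)`. -/
def t3 (n : ℕ) : Equiv.Perm ℕ :=
  Equiv.swap 1 3 * Equiv.swap 2 4 * Equiv.swap (n+1) (n+3) * Equiv.swap (n+2) (n+4)

/-- `t₄ = (1,2)(n+1,n+2) ∏_{i=1}^{n-2} (2+i, n+2+i)`. -/
def t4 (n : ℕ) : Equiv.Perm ℕ :=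
  Equiv.swap 1 2 * Equiv.swap (n+1) (n+2) *
    ((List.range (n - 2)).map (fun j => Equiv.swap (2 + (j+1)) (n+2+(j+1)))).prod

/-!
The three generators lie in the diagonal copy of `Sym(n)` in `Sym(2n)`, where a permutation is
determined by its action on `{1, …, n}`. For odd `n`, the product `t₁t₂` acts there as `(1 2)` times
a cycle on `{3, …, n}`; the length `n - 2` of that cycle is odd, so `(t₁t₂)^(n-2)` is the diagonal
transposition `(1 2)`. The pairs whose diagonal transposition lies in a given subgroup form an
equivalence relation that is invariant under the diagonal elements of the subgroup. Conjugating by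
`t₃` gives `3 ~ 4`; since `t₁` sends `3` to `4` and `t₂` fixes `3`, the class of `3` is stable under
`t₁` and `t₂`, hence contains `3, 4, …, n`. Finally `t₃` turns `3 ~ 5` into `1 ~ 5`, and `1 ~ 2`.
-/

theorem pow_apply_of_odd {α : Type*} {f : Perm α} {a b : α} {k : ℕ} (hab : f a = b)
    (hba : f b = a) (hk : Odd k) : (f ^ k) a = b := by
  obtain ⟨j, rfl⟩ := hk
  have hsq : (f ^ 2) a = a := by rw [pow_two, Perm.mul_apply, hab, hba]
  rw [pow_succ', pow_mul, Perm.mul_apply, Perm.pow_apply_eq_self_of_apply_eq_self hsq, hab]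

/-- The double transposition `(a, b)(n + a, n + b)`, i.e. the transposition `(a, b)` carried out
simultaneously in the two copies `{1, …, n}` and `{n + 1, …, 2n}` of `{1, …, n}`. -/
def diagonalSwap (n a b : ℕ) : Perm ℕ :=
  swap a b * swap (n + a) (n + b)

/-- The diagonal copy of `Sym(n)` in `Sym(2n)`: the permutations of `ℕ` that preserve `{1, …, n}`,
act in the same way on its translate by `n`, and fix everything else. Closure under inverses is
true as well, but only products are needed, so this is set up as a submonoid. -/
def diagonalSubmonoid (n : ℕ) : Submonoid (Perm ℕ) where
  carrier := {g | (∀ x ∈ Set.Icc 1 n, g x ∈ Set.Icc 1 n ∧ g (n + x) = n + g x) ∧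
    ∀ x ∉ Set.Icc 1 (2 * n), g x = x}
  one_mem' := ⟨fun _ hx => ⟨hx, rfl⟩, fun _ _ => rfl⟩
  mul_mem' := by
    rintro f g ⟨hf, hf'⟩ ⟨hg, hg'⟩
    refine ⟨fun x hx => ?_, fun x hx => ?_⟩
    · obtain ⟨hgx, hgnx⟩ := hg x hx
      simpa only [Perm.mul_apply, hgnx] using hf (g x) hgx
    · rw [Perm.mul_apply, hg' x hx, hf' x hx]

/-- The product of the double transpositions `(a + 2i, a + 2i + 1)(n + a + 2i, n + a + 2i + 1)` for
`i < k`; both `t₁` and `t₂` are of this form. -/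
def adjacentSwaps (n a k : ℕ) : Perm ℕ :=
  ((List.range k).map fun i => diagonalSwap n (a + 2 * i) (a + 2 * i + 1)).prod

section Diagonal

variable {n a b c x : ℕ} {f g : Perm ℕ} {H : Subgroup (Perm ℕ)}

theorem diagonalSubmonoid_ext (hf : f ∈ diagonalSubmonoid n) (hg : g ∈ diagonalSubmonoid n)
    (h : ∀ x ∈ Set.Icc 1 n, f x = g x) : f = g := by
  ext x
  by_cases hx : x ∈ Set.Icc 1 (2 * n)
  · by_cases hxn : x ≤ n
    · exact h x ⟨hx.1, hxn⟩
    · obtain ⟨y, rfl⟩ := Nat.exists_eq_add_of_lt (not_le.mp hxn)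
      have hy : y + 1 ∈ Set.Icc 1 n := by
        simp only [Set.mem_Icc] at hx ⊢
        omega
      rw [add_assoc, (hf.1 _ hy).2, (hg.1 _ hy).2, h _ hy]
  · rw [hf.2 x hx, hg.2 x hx]

theorem diagonalSwap_apply (ha : 1 ≤ a) (hb : 1 ≤ b) (hx : x ≤ n) :
    diagonalSwap n a b x = swap a b x := by
  rw [diagonalSwap, Perm.mul_apply,
    swap_apply_of_ne_of_ne (a := n + a) (b := n + b) (by omega) (by omega)]

theorem diagonalSwap_mem_diagonalSubmonoid (ha : a ∈ Set.Icc 1 n) (hb : b ∈ Set.Icc 1 n) :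
    diagonalSwap n a b ∈ diagonalSubmonoid n := by
  rw [Set.mem_Icc] at ha hb
  refine ⟨fun x hx => ?_, fun x hx => ?_⟩
  all_goals
    simp only [diagonalSwap, Perm.mul_apply, swap_apply_def, Set.mem_Icc] at hx ⊢
    grind

theorem diagonalSwap_apply_apply (hg : g ∈ diagonalSubmonoid n) (ha : a ∈ Set.Icc 1 n)
    (hb : b ∈ Set.Icc 1 n) :
    diagonalSwap n (g a) (g b) = g * diagonalSwap n a b * g⁻¹ := by
  rw [diagonalSwap, ← (hg.1 a ha).2, ← (hg.1 b hb).2, swap_apply_apply, swap_apply_apply,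
    diagonalSwap]
  group

theorem diagonalSwap_self_mem : diagonalSwap n a a ∈ H := by
  simp only [diagonalSwap, swap_self, ← Perm.one_def, mul_one, one_mem]

theorem diagonalSwap_comm (n a b : ℕ) : diagonalSwap n a b = diagonalSwap n b a := by
  rw [diagonalSwap, swap_comm a, swap_comm (n + a), diagonalSwap]

theorem diagonalSwap_apply_apply_mem (hg : g ∈ diagonalSubmonoid n) (hgH : g ∈ H)
    (ha : a ∈ Set.Icc 1 n) (hb : b ∈ Set.Icc 1 n) (hab : diagonalSwap n a b ∈ H) :
    diagonalSwap n (g a) (g b) ∈ H := by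
  rw [diagonalSwap_apply_apply hg ha hb]
  exact mul_mem (mul_mem hgH hab) (inv_mem hgH)

theorem diagonalSwap_mem_trans (ha : a ∈ Set.Icc 1 n) (hb : b ∈ Set.Icc 1 n)
    (hc : c ∈ Set.Icc 1 n) (hab : diagonalSwap n a b ∈ H) (hbc : diagonalSwap n b c ∈ H) :
    diagonalSwap n a c ∈ H := by
  rcases eq_or_ne a b with rfl | hne_b
  · exact hbc
  rcases eq_or_ne a c with rfl | hne_c
  · exact diagonalSwap_self_mem
  have h := diagonalSwap_apply_apply_mem (diagonalSwap_mem_diagonalSubmonoid hb hc) hbc ha hb hab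
  rwa [diagonalSwap_apply hb.1 hc.1 ha.2, diagonalSwap_apply hb.1 hc.1 hb.2,
    swap_apply_of_ne_of_ne hne_b hne_c, swap_apply_left] at h

-- For fixed `a`, the set of all `b` with `diagonalSwap n a b ∈ H` is stable under every `g ∈ H`
-- that sends `a` into it.
theorem diagonalSwap_apply_right_mem (hg : g ∈ diagonalSubmonoid n) (hgH : g ∈ H)
    (ha : a ∈ Set.Icc 1 n) (hb : b ∈ Set.Icc 1 n) (haga : diagonalSwap n a (g a) ∈ H)
    (hab : diagonalSwap n a b ∈ H) : diagonalSwap n a (g b) ∈ H :=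
  diagonalSwap_mem_trans ha (hg.1 a ha).1 (hg.1 b hb).1 haga
    (diagonalSwap_apply_apply_mem hg hgH ha hb hab)

end Diagonal

section AdjacentSwaps

variable {n a k x : ℕ}

theorem adjacentSwaps_succ (n a k : ℕ) :
    adjacentSwaps n a (k + 1) =
      adjacentSwaps n a k * diagonalSwap n (a + 2 * k) (a + 2 * k + 1) := by
  simp only [adjacentSwaps, List.range_succ, List.map_append, List.map_cons, List.map_nil,
    List.prod_append, List.prod_singleton]

theorem adjacentSwaps_mem_diagonalSubmonoid (ha : 1 ≤ a) (hk : a + 2 * k ≤ n + 1) :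
    adjacentSwaps n a k ∈ diagonalSubmonoid n := by
  refine Submonoid.list_prod_mem _ fun g hg => ?_
  obtain ⟨i, hi, rfl⟩ := List.mem_map.mp hg
  rw [List.mem_range] at hi
  exact diagonalSwap_mem_diagonalSubmonoid ⟨by omega, by omega⟩ ⟨by omega, by omega⟩

theorem adjacentSwaps_apply (ha : 1 ≤ a) (hk : a + 2 * k ≤ n + 1) (hx : x ≤ n) :
    adjacentSwaps n a k x =
      if x < a ∨ a + 2 * k ≤ x then x else if x % 2 = a % 2 then x + 1 else x - 1 := by
  induction k generalizing x with
  | zero =>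
    rw [if_pos (by omega)]
    rfl
  | succ k ih =>
    have last_swap : diagonalSwap n (a + 2 * k) (a + 2 * k + 1) x =
        if x = a + 2 * k then x + 1 else if x = a + 2 * k + 1 then x - 1 else x := by
      rw [diagonalSwap_apply (by omega) (by omega) hx, swap_apply_def]
      split_ifs <;> omega
    rw [adjacentSwaps_succ, Perm.mul_apply, last_swap, ih (by omega) (by split_ifs <;> omega)]
    split_ifs <;> omega

end AdjacentSwaps

section Generators

variable {n x : ℕ}

theorem t1_eq_adjacentSwaps (hn : 2 ≤ n) : t1 n = adjacentSwaps n 1 (n / 2) := by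
  rw [t1, adjacentSwaps, show (n - 2) / 2 + 1 = n / 2 by omega]
  refine congrArg List.prod (List.map_congr_left fun i _ => ?_)
  rw [diagonalSwap]
  congr 2 <;> ring

theorem t2_eq_adjacentSwaps (n : ℕ) : t2 n = adjacentSwaps n 4 ((n - 3) / 2) := by
  rw [t2, adjacentSwaps]
  refine congrArg List.prod (List.map_congr_left fun i _ => ?_)
  rw [diagonalSwap]
  congr 2 <;> ring

theorem t3_eq_diagonalSwap_mul (hn : 4 ≤ n) :
    t3 n = diagonalSwap n 1 3 * diagonalSwap n 2 4 := by
  have hcomm : Commute (swap 2 4) (swap (n + 1) (n + 3)) := by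
    refine (Perm.disjoint_swap_swap ?_).commute
    grind
  simp only [t3, diagonalSwap, mul_assoc]
  rw [← mul_assoc (swap 2 4), hcomm.eq, mul_assoc]

theorem t1_mem_diagonalSubmonoid (hn : 2 ≤ n) : t1 n ∈ diagonalSubmonoid n := by
  rw [t1_eq_adjacentSwaps hn]
  exact adjacentSwaps_mem_diagonalSubmonoid le_rfl (by omega)

theorem t2_mem_diagonalSubmonoid (hn : 3 ≤ n) : t2 n ∈ diagonalSubmonoid n := by
  rw [t2_eq_adjacentSwaps]
  exact adjacentSwaps_mem_diagonalSubmonoid (by omega) (by omega)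

theorem t3_mem_diagonalSubmonoid (hn : 4 ≤ n) : t3 n ∈ diagonalSubmonoid n := by
  rw [t3_eq_diagonalSwap_mul hn]
  exact mul_mem
    (diagonalSwap_mem_diagonalSubmonoid ⟨by omega, by omega⟩ ⟨by omega, by omega⟩)
    (diagonalSwap_mem_diagonalSubmonoid ⟨by omega, by omega⟩ ⟨by omega, by omega⟩)

theorem t1_apply (hn : 2 ≤ n) (hx : x ∈ Set.Icc 1 n) :
    t1 n x = if x % 2 = 0 then x - 1 else if x = n then x else x + 1 := by
  obtain ⟨hx1, hxn⟩ := hx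
  rw [t1_eq_adjacentSwaps hn, adjacentSwaps_apply le_rfl (by omega) hxn]
  split_ifs <;> omega

theorem t2_apply (hn : 3 ≤ n) (hx : x ≤ n) :
    t2 n x = if x < 4 then x else if x % 2 = 1 then x - 1 else if x = n then x else x + 1 := by
  rw [t2_eq_adjacentSwaps, adjacentSwaps_apply (by omega) (by omega) hx]
  split_ifs <;> omega

theorem t3_apply (hn : 4 ≤ n) (hx : x ≤ n) : t3 n x = swap 1 3 (swap 2 4 x) := by
  have hx' : swap 2 4 x ≤ n := by
    rw [swap_apply_def]
    split_ifs <;> omega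
  rw [t3_eq_diagonalSwap_mul hn, Perm.mul_apply, diagonalSwap_apply (by omega) (by omega) hx,
    diagonalSwap_apply (by omega) (by omega) hx']

end Generators

/-- The product `t₁t₂`. For `n = 2m + 1` it acts on each of the two copies of `{1, …, n}` as
`(1 2)(3 4 6 … 2m 2m+1 2m-1 … 5)`. -/
def t1t2 (n : ℕ) : Perm ℕ :=
  t1 n * t2 n

section T1T2

variable {m k x : ℕ}

theorem t1t2_mem_diagonalSubmonoid {n : ℕ} (hn : 3 ≤ n) : t1t2 n ∈ diagonalSubmonoid n :=
  mul_mem (t1_mem_diagonalSubmonoid (by omega)) (t2_mem_diagonalSubmonoid hn)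

theorem t1t2_apply (hm : 2 ≤ m) (hx : x ∈ Set.Icc 1 (2 * m + 1)) :
    t1t2 (2 * m + 1) x =
      if x = 1 then 2 else if x = 2 then 1 else if x = 3 then 4
      else if x % 2 = 1 then x - 2 else if x = 2 * m then x + 1 else x + 2 := by
  obtain ⟨hx1, hxn⟩ := hx
  have ht2 := t2_apply (n := 2 * m + 1) (by omega) hxn
  have ht2_mem : t2 (2 * m + 1) x ∈ Set.Icc 1 (2 * m + 1) :=
    ((t2_mem_diagonalSubmonoid (by omega)).1 x ⟨hx1, hxn⟩).1
  rw [t1t2, Perm.mul_apply, t1_apply (by omega) ht2_mem, ht2]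
  split_ifs <;> omega

theorem t1t2_pow_succ_apply_three (hk : k + 2 ≤ m) :
    (t1t2 (2 * m + 1) ^ (k + 1)) 3 = 2 * k + 4 := by
  induction k with
  | zero =>
    rw [zero_add, pow_one, t1t2_apply (by omega) ⟨by omega, by omega⟩]
    rfl
  | succ k ih =>
    rw [pow_succ', Perm.mul_apply, ih (by omega),
      t1t2_apply (by omega) ⟨by omega, by omega⟩]
    split_ifs <;> omega

theorem t1t2_pow_add_apply_three (hm : 2 ≤ m) (hk : k < m) :
    (t1t2 (2 * m + 1) ^ (m + k)) 3 = 2 * m + 1 - 2 * k := by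
  induction k with
  | zero =>
    have hpow : (t1t2 (2 * m + 1) ^ (m - 2 + 1)) 3 = 2 * (m - 2) + 4 :=
      t1t2_pow_succ_apply_three (by omega)
    rw [show m + 0 = m - 2 + 1 + 1 by omega, pow_succ', Perm.mul_apply, hpow,
      t1t2_apply hm ⟨by omega, by omega⟩]
    split_ifs <;> omega
  | succ k ih =>
    rw [← add_assoc, pow_succ', Perm.mul_apply, ih (by omega),
      t1t2_apply hm ⟨by omega, by omega⟩]
    split_ifs <;> omega

theorem exists_t1t2_pow_apply_three (hm : 2 ≤ m) (hx : x ∈ Set.Icc 3 (2 * m + 1)) :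
    ∃ k, (t1t2 (2 * m + 1) ^ k) 3 = x := by
  obtain ⟨hx3, hxn⟩ := hx
  obtain ⟨j, rfl | rfl⟩ := x.even_or_odd'
  · exact ⟨j - 2 + 1, by rw [t1t2_pow_succ_apply_three (by omega)]; omega⟩
  · exact ⟨m + (m - j), by rw [t1t2_pow_add_apply_three hm (by omega)]; omega⟩

theorem t1t2_pow_apply_of_three_le (hm : 2 ≤ m) (hx : x ∈ Set.Icc 3 (2 * m + 1)) :
    (t1t2 (2 * m + 1) ^ (2 * m - 1)) x = x := by
  have period : (t1t2 (2 * m + 1) ^ (2 * m - 1)) 3 = 3 := by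
    rw [show 2 * m - 1 = m + (m - 1) by omega, t1t2_pow_add_apply_three hm (by omega)]
    omega
  obtain ⟨k, rfl⟩ := exists_t1t2_pow_apply_three hm hx
  rw [← Perm.mul_apply, ← pow_mul_comm, Perm.mul_apply, period]

theorem t1t2_pow_eq_diagonalSwap (hm : 2 ≤ m) :
    t1t2 (2 * m + 1) ^ (2 * m - 1) = diagonalSwap (2 * m + 1) 1 2 := by
  have h1 : t1t2 (2 * m + 1) 1 = 2 := by
    rw [t1t2_apply hm ⟨by omega, by omega⟩, if_pos rfl]
  have h2 : t1t2 (2 * m + 1) 2 = 1 := by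
    rw [t1t2_apply hm ⟨by omega, by omega⟩, if_neg (by omega), if_pos rfl]
  have hodd : Odd (2 * m - 1) := ⟨m - 1, by omega⟩
  refine diagonalSubmonoid_ext (n := 2 * m + 1)
    (pow_mem (t1t2_mem_diagonalSubmonoid (by omega)) _)
    (diagonalSwap_mem_diagonalSubmonoid ⟨by omega, by omega⟩ ⟨by omega, by omega⟩)
    fun x hx => ?_
  rw [diagonalSwap_apply le_rfl (by omega) hx.2]
  obtain rfl | rfl | hx3 : x = 1 ∨ x = 2 ∨ 3 ≤ x := by
    have := hx.1
    omega
  · rw [pow_apply_of_odd h1 h2 hodd, swap_apply_left]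
  · rw [pow_apply_of_odd h2 h1 hodd, swap_apply_right]
  · rw [t1t2_pow_apply_of_three_le hm ⟨hx3, hx.2⟩,
      swap_apply_of_ne_of_ne (by omega) (by omega)]

end T1T2

section Generated

variable {n x : ℕ} {H : Subgroup (Perm ℕ)}

theorem diagonalSwap_one_two_mem (hn : 5 ≤ n) (hodd : Odd n) (h1 : t1 n ∈ H) (h2 : t2 n ∈ H) :
    diagonalSwap n 1 2 ∈ H := by
  obtain ⟨m, rfl⟩ := hodd
  rw [← t1t2_pow_eq_diagonalSwap (by omega)]
  exact pow_mem (mul_mem h1 h2) _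

theorem diagonalSwap_t3_apply_mem {a b : ℕ} (hn : 4 ≤ n) (h3 : t3 n ∈ H) (ha : a ∈ Set.Icc 1 n)
    (hb : b ∈ Set.Icc 1 n) (hab : diagonalSwap n a b ∈ H) :
    diagonalSwap n (swap 1 3 (swap 2 4 a)) (swap 1 3 (swap 2 4 b)) ∈ H := by
  rw [← t3_apply hn ha.2, ← t3_apply hn hb.2]
  exact diagonalSwap_apply_apply_mem (t3_mem_diagonalSubmonoid hn) h3 ha hb hab

theorem diagonalSwap_three_four_mem (hn : 4 ≤ n) (h3 : t3 n ∈ H) (h12 : diagonalSwap n 1 2 ∈ H) :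
    diagonalSwap n 3 4 ∈ H :=
  diagonalSwap_t3_apply_mem hn h3 ⟨by omega, by omega⟩ ⟨by omega, by omega⟩ h12

theorem diagonalSwap_three_mem_of_three_le (h1 : t1 n ∈ H) (h2 : t2 n ∈ H)
    (h34 : diagonalSwap n 3 4 ∈ H) (hx : x ∈ Set.Icc 3 n) : diagonalSwap n 3 x ∈ H := by
  obtain ⟨hx3, hxn⟩ := hx
  have three_mem : 3 ∈ Set.Icc 1 n := ⟨by omega, hx3.trans hxn⟩
  induction x, hx3 using Nat.le_induction with
  | base => exact diagonalSwap_self_mem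
  | succ x hx3 ih =>
    have x_mem : x ∈ Set.Icc 1 n := ⟨by omega, by omega⟩
    by_cases hparity : x % 2 = 1
    · have t1_three : t1 n 3 = 4 := by
        rw [t1_apply (by omega) three_mem, if_neg (by omega), if_neg (by omega)]
      have t1_x : t1 n x = x + 1 := by
        rw [t1_apply (by omega) x_mem]
        split_ifs <;> omega
      rw [← t1_x]
      exact diagonalSwap_apply_right_mem (t1_mem_diagonalSubmonoid (by omega)) h1 three_mem x_mem
        (t1_three ▸ h34) (ih (by omega))
    · have t2_three : t2 n 3 = 3 := by
        rw [t2_apply (by omega) three_mem.2, if_pos (by omega)]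
      have t2_x : t2 n x = x + 1 := by
        rw [t2_apply (by omega) x_mem.2]
        split_ifs <;> omega
      rw [← t2_x]
      exact diagonalSwap_apply_right_mem (t2_mem_diagonalSubmonoid (by omega)) h2 three_mem x_mem
        (t2_three.symm ▸ diagonalSwap_self_mem) (ih (by omega))

theorem diagonalSwap_three_mem (hn : 5 ≤ n) (h1 : t1 n ∈ H) (h2 : t2 n ∈ H) (h3 : t3 n ∈ H)
    (h12 : diagonalSwap n 1 2 ∈ H) (hx : x ∈ Set.Icc 1 n) : diagonalSwap n 3 x ∈ H := by
  have one_mem : 1 ∈ Set.Icc 1 n := ⟨by omega, by omega⟩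
  have two_mem : 2 ∈ Set.Icc 1 n := ⟨by omega, by omega⟩
  have three_mem : 3 ∈ Set.Icc 1 n := ⟨by omega, by omega⟩
  have five_mem : 5 ∈ Set.Icc 1 n := ⟨by omega, by omega⟩
  have h34 := diagonalSwap_three_four_mem (by omega) h3 h12
  have h35 : diagonalSwap n 3 5 ∈ H :=
    diagonalSwap_three_mem_of_three_le h1 h2 h34 ⟨by omega, by omega⟩
  have h15 : diagonalSwap n 1 5 ∈ H :=
    diagonalSwap_t3_apply_mem (by omega) h3 three_mem five_mem h35
  have h31 : diagonalSwap n 3 1 ∈ H :=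
    diagonalSwap_mem_trans three_mem five_mem one_mem h35 (diagonalSwap_comm n 1 5 ▸ h15)
  obtain rfl | rfl | hx3 : x = 1 ∨ x = 2 ∨ 3 ≤ x := by
    have := hx.1
    omega
  · exact h31
  · exact diagonalSwap_mem_trans three_mem one_mem two_mem h31 h12
  · exact diagonalSwap_three_mem_of_three_le h1 h2 h34 ⟨hx3, hx.2⟩

end Generated

/-- For odd `n ≥ 5` and each `1 ≤ i < n`, the permutation `(i,i+1)(n+i,n+i+1)`
lies in `G₁₂₃ = ⟨t₁, t₂, t₃⟩`. -/
theorem beta_mem_G123 (n : ℕ) (hn : 5 ≤ n) (hodd : Odd n) (i : ℕ)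
    (hi1 : 1 ≤ i) (hin : i < n) :
    Equiv.swap i (i+1) * Equiv.swap (n+i) (n+i+1) ∈
      Subgroup.closure {t1 n, t2 n, t3 n} := by
  have h1 : t1 n ∈ Subgroup.closure {t1 n, t2 n, t3 n} := Subgroup.subset_closure (by simp)
  have h2 : t2 n ∈ Subgroup.closure {t1 n, t2 n, t3 n} := Subgroup.subset_closure (by simp)
  have h3 : t3 n ∈ Subgroup.closure {t1 n, t2 n, t3 n} := Subgroup.subset_closure (by simp)
  have h12 := diagonalSwap_one_two_mem hn hodd h1 h2
  have h_three : ∀ x ∈ Set.Icc 1 n, diagonalSwap n 3 x ∈ Subgroup.closure {t1 n, t2 n, t3 n} :=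
    fun x hx => diagonalSwap_three_mem hn h1 h2 h3 h12 hx
  have hi : i ∈ Set.Icc 1 n := ⟨hi1, hin.le⟩
  have hi' : i + 1 ∈ Set.Icc 1 n := ⟨by omega, hin⟩
  exact diagonalSwap_mem_trans hi ⟨by omega, by omega⟩ hi'
    (diagonalSwap_comm n 3 i ▸ h_three i hi) (h_three (i + 1) hi')
end

section
/- Let n ≥ 5 be odd. With t₁, t₂, t₃, t₄ the involutions in Sym(2n) defined by t₁ = ∏_{i=0}^{⌊(n-2)/2⌋}(1+2i,2+2i)(n+1+2i,n+2+2i), t₂ = ∏_{i=1}^{⌊(n-3)/2⌋}(2+2i,3+2i)(n+2+2i,n+3+2i), t₃ = (1,3)(2,4)(n+1,n+3)(n+2,n+4), t₄ = (1,2)(n+1,n+2)∏_{i=1}^{n-2}(2+i,n+2+i), one has (t₁t₂t₃t₄)ⁿ = ∏_{i=1}^{n}(i, n+i). -/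
open Equiv

/-!
Identify `{1, …, 2n}` with `{1, …, n} × ℤ/2`, the pair `(i, s)` standing for `i + n s`. Each of
`t₁, …, t₄` then acts as `(i, s) ↦ (c i, s + ε i)`: for `t₁, t₂, t₃` the sign `ε` vanishes, while
`t₄` has sign `1` exactly on `{3, …, n}`. In `t₁t₂t₃t₄` the permutation `c` of `{1, …, n}` is an
`n`-cycle: passing from `n` to `n + 2` multiplies it on the left by `(n, n+1)(n+1, n+2)`, which
inserts two new points into the cycle after the preimage of `n`. Iterating `n` times, `c ^ n` is the
identity and the sign picked up by every point is the sum of `ε` over the whole cycle, namely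
`n - 2 ≡ 1 mod 2`. Hence the `n`-th power exchanges `i` and `n + i` for every `i`.
-/

section Perm

variable {α : Type*} {c : Perm α}

theorem list_prod_apply_eq_self {l : List (Perm α)} {x : α} (h : ∀ g ∈ l, g x = x) :
    l.prod x = x :=
  list_prod_mem (S := MulAction.stabilizer (Perm α) x) h

theorem commute_swap_of_apply_eq_self [DecidableEq α] {x y : α} (hx : c x = x) (hy : c y = y) :
    Commute c (swap x y) := by
  rw [commute_iff_eq, mul_swap_eq_swap_mul, hx, hy]

theorem sameCycle_of_forall_sameCycle_apply {g : Perm α} {s : Set α} (hc : c.IsCycleOn s)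
    (hg : ∀ x ∈ s, g.SameCycle x (c x)) {x y : α} (hx : x ∈ s) (hy : y ∈ s) :
    g.SameCycle x y := by
  obtain ⟨m, rfl⟩ := hc.2 hx hy
  have mem_zpow (k : ℤ) : (c ^ k) x ∈ s := (hc.1.perm_zpow k).mapsTo hx
  have step (k : ℤ) : g.SameCycle ((c ^ k) x) ((c ^ (k + 1)) x) := by
    rw [add_comm, zpow_one_add, Perm.mul_apply]
    exact hg _ (mem_zpow k)
  clear hy
  induction m with
  | zero => exact .refl ..
  | succ k ih => exact ih.trans (step k)
  | pred k ih => exact ih.trans (by simpa using (step (-k - 1)).symm)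

theorem isCycleOn_swap_mul_insert [DecidableEq α] {s : Set α} {a b : α} (hc : c.IsCycleOn s)
    (ha : a ∈ s) (hb : b ∉ s) (hcb : c b = b) : (swap a b * c).IsCycleOn (insert b s) := by
  set g := swap a b * c with hg
  have gb : g b = a := by simp [hg, hcb]
  have sameCycle_b_a : g.SameCycle b a := ⟨1, by simpa using gb⟩
  have sameCycle_apply (x : α) (hx : x ∈ s) : g.SameCycle x (c x) := by
    have sameCycle_g : g.SameCycle x (g x) := ⟨1, by simp⟩
    by_cases hxa : c x = a
    · have gx : g x = b := by simp [hg, hxa]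
      rw [gx] at sameCycle_g
      exact hxa ▸ sameCycle_g.trans sameCycle_b_a
    · have hxb : c x ≠ b := fun h => hb (h ▸ hc.1.mapsTo hx)
      rwa [hg, Perm.mul_apply, swap_apply_of_ne_of_ne hxa hxb] at sameCycle_g
  have sameCycle_a (x : α) (hx : x ∈ insert b s) : g.SameCycle x a := by
    rcases hx with rfl | hx
    · exact sameCycle_b_a
    · exact sameCycle_of_forall_sameCycle_apply hc sameCycle_apply hx ha
  have bijOn_c : Set.BijOn c (insert b s) (insert b s) := by
    have bijOn_insert := hc.1.insert (a := b) (by rwa [hcb])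
    rwa [hcb] at bijOn_insert
  exact ⟨(bijOn_swap (.inr ha) (.inl rfl)).comp bijOn_c,
    fun x hx y hy => (sameCycle_a x hx).trans (sameCycle_a y hy).symm⟩

theorem birkhoffSum_card_of_isCycleOn {M : Type*} [AddCommMonoid M] {s : Finset α}
    (hc : c.IsCycleOn s) (f : α → M) {a : α} (ha : a ∈ s) :
    birkhoffSum c f s.card a = ∑ x ∈ s, f x := by
  refine Finset.sum_nbij (fun k => (c ^ k) a) (fun k _ => (hc.1.perm_pow k).mapsTo ha) ?_ ?_
    fun _ _ => rfl
  · intro k hk l hl hkl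
    exact ((hc.pow_apply_eq_pow_apply ha).1 hkl).eq_of_lt_of_lt (Finset.mem_range.1 hk)
      (Finset.mem_range.1 hl)
  · intro x hx
    obtain ⟨k, hk, rfl⟩ := hc.exists_pow_eq ha hx
    exact ⟨k, by simpa using hk, rfl⟩

end Perm

/-- The point of `{1, …, 2n}` encoding the pair `(i, s)`, for `1 ≤ i ≤ n`: it is `i` on the sheet
`s = 0` and `i + n` on the sheet `s = 1`. -/
def sheetPoint (n i : ℕ) (s : ZMod 2) : ℕ := i + n * s.val

@[simp]
theorem sheetPoint_zero (n i : ℕ) : sheetPoint n i 0 = i := by simp [sheetPoint]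

@[simp]
theorem sheetPoint_one (n i : ℕ) : sheetPoint n i 1 = i + n := by simp [sheetPoint, ZMod.val_one]

theorem exists_sheetPoint_eq {n x : ℕ} (hx : x ∈ Set.Icc 1 (2 * n)) :
    ∃ i ∈ Set.Icc 1 n, ∃ s, sheetPoint n i s = x := by
  obtain ⟨h1, h2⟩ := hx
  rcases le_or_gt x n with h | h
  · exact ⟨x, ⟨h1, h⟩, 0, sheetPoint_zero n x⟩
  · exact ⟨x - n, ⟨by omega, by omega⟩, 1, by rw [sheetPoint_one]; omega⟩

/-- The signed permutation relation: `g` permutes `{1, …, 2n}`, seen as `{1, …, n} × ℤ/2` through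
`sheetPoint`, by `(i, s) ↦ (c i, s + ε i)`, and fixes every other natural number. Only the values
of `c` and `ε` on `{1, …, n}` matter. -/
structure IsSignedLift (n : ℕ) (g c : Perm ℕ) (ε : ℕ → ZMod 2) : Prop where
  mapsTo : Set.MapsTo c (Set.Icc 1 n) (Set.Icc 1 n)
  apply_sheetPoint : ∀ i ∈ Set.Icc 1 n, ∀ s,
    g (sheetPoint n i s) = sheetPoint n (c i) (s + ε i)
  apply_of_notMem : ∀ x ∉ Set.Icc 1 (2 * n), g x = x

namespace IsSignedLift

variable {n : ℕ} {g h c d : Perm ℕ} {ε δ : ℕ → ZMod 2}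

theorem eq_of_eqOn (hg : IsSignedLift n g c ε) (hh : IsSignedLift n h d δ)
    (hcd : Set.EqOn c d (Set.Icc 1 n)) (hεδ : Set.EqOn ε δ (Set.Icc 1 n)) : g = h := by
  ext x
  by_cases hx : x ∈ Set.Icc 1 (2 * n)
  · obtain ⟨i, hi, s, rfl⟩ := exists_sheetPoint_eq hx
    rw [hg.apply_sheetPoint i hi, hh.apply_sheetPoint i hi, hcd hi, hεδ hi]
  · rw [hg.apply_of_notMem x hx, hh.apply_of_notMem x hx]

theorem congr_sign (hg : IsSignedLift n g c ε) (hεδ : Set.EqOn ε δ (Set.Icc 1 n)) :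
    IsSignedLift n g c δ where
  mapsTo := hg.mapsTo
  apply_sheetPoint i hi s := by rw [hg.apply_sheetPoint i hi, hεδ hi]
  apply_of_notMem := hg.apply_of_notMem

theorem one (n : ℕ) : IsSignedLift n 1 1 0 where
  mapsTo := Set.mapsTo_id _
  apply_sheetPoint i _ s := by simp
  apply_of_notMem _ _ := rfl

theorem mul (hg : IsSignedLift n g c ε) (hh : IsSignedLift n h d δ) :
    IsSignedLift n (g * h) (c * d) (δ + ε ∘ d) where
  mapsTo := hg.mapsTo.comp hh.mapsTo
  apply_sheetPoint i hi s := by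
    simp [hh.apply_sheetPoint i hi, hg.apply_sheetPoint (d i) (hh.mapsTo hi), add_assoc]
  apply_of_notMem x hx := by
    rw [Perm.mul_apply, hh.apply_of_notMem x hx, hg.apply_of_notMem x hx]

theorem mul_zero (hg : IsSignedLift n g c 0) (hh : IsSignedLift n h d δ) :
    IsSignedLift n (g * h) (c * d) δ := by
  simpa using hg.mul hh

theorem pow (hg : IsSignedLift n g c ε) (k : ℕ) :
    IsSignedLift n (g ^ k) (c ^ k) (birkhoffSum c ε k) := by
  induction k with
  | zero => simpa using one n
  | succ k ih =>
    rw [pow_succ, pow_succ]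
    convert ih.mul hg using 1
    exact funext fun x => birkhoffSum_succ' c ε k x

theorem list_prod_map {ι : Type*} {l : List ι} {g c : ι → Perm ℕ}
    (h : ∀ i ∈ l, IsSignedLift n (g i) (c i) 0) :
    IsSignedLift n (l.map g).prod (l.map c).prod 0 := by
  induction l with
  | nil => exact one n
  | cons i l ih =>
    rw [List.forall_mem_cons] at h
    simpa using h.1.mul_zero (ih h.2)

theorem swap_mul_swap {a b : ℕ} (ha : a ∈ Set.Icc 1 n) (hb : b ∈ Set.Icc 1 n) :
    IsSignedLift n (swap a b * swap (n + a) (n + b)) (swap a b) 0 where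
  mapsTo := (bijOn_swap ha hb).mapsTo
  apply_sheetPoint i hi s := by
    simp only [Set.mem_Icc] at ha hb hi
    obtain rfl | rfl : s = 0 ∨ s = 1 := by decide +revert
    all_goals
      simp only [Pi.zero_apply, add_zero, sheetPoint_zero, sheetPoint_one, Perm.mul_apply,
        swap_apply_def]
      grind
  apply_of_notMem x hx := by
    simp only [Set.mem_Icc] at ha hb hx
    grind [Perm.mul_apply, swap_apply_of_ne_of_ne]

theorem swap_add {a : ℕ} (ha : a ∈ Set.Icc 1 n) :
    IsSignedLift n (swap a (n + a)) 1 (Pi.single a 1) where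
  mapsTo := Set.mapsTo_id _
  apply_sheetPoint i hi s := by
    simp only [Set.mem_Icc] at ha hi
    obtain rfl | hia := eq_or_ne i a
    · obtain rfl | rfl : s = 0 ∨ s = 1 := by decide +revert
      · simp [add_comm]
      · simp [add_comm i n, show (1 + 1 : ZMod 2) = 0 from rfl]
    · have swap_sheetPoint : swap a (n + a) (sheetPoint n i s) = sheetPoint n i s := by
        obtain rfl | rfl : s = 0 ∨ s = 1 := by decide +revert
        all_goals
          simp only [sheetPoint_zero, sheetPoint_one]
          exact swap_apply_of_ne_of_ne (by omega) (by omega)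
      simp [swap_sheetPoint, hia]
  apply_of_notMem x hx := by
    simp only [Set.mem_Icc] at ha hx
    exact swap_apply_of_ne_of_ne (by omega) (by omega)

theorem list_prod_swap_add {l : List ℕ} (hl : ∀ a ∈ l, a ∈ Set.Icc 1 n) :
    IsSignedLift n (l.map fun a => swap a (n + a)).prod 1 fun i => l.count i := by
  induction l with
  | nil => simpa using! one n
  | cons a l ih =>
    rw [List.forall_mem_cons] at hl
    refine ((swap_add hl.1).mul (ih hl.2)).congr_sign fun i _ => ?_
    simp [List.count_cons, Pi.single_apply, eq_comm (a := i)]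

theorem pow_eq_of_isCycleOn (hg : IsSignedLift n g c ε) (hc : c.IsCycleOn (Finset.Icc 1 n))
    (hh : IsSignedLift n h 1 fun _ => ∑ i ∈ Finset.Icc 1 n, ε i) : g ^ n = h := by
  have card_Icc : (Finset.Icc 1 n).card = n := by simp
  refine (hg.pow n).eq_of_eqOn hh (fun i hi => ?_) fun i hi => ?_ <;>
    rw [← Finset.coe_Icc, Finset.mem_coe] at hi
  · simpa [card_Icc] using hc.pow_card_apply hi
  · simpa [card_Icc] using birkhoffSum_card_of_isCycleOn hc ε hi

end IsSignedLift

/-- The product `(1,2)(3,4)⋯(2q-1,2q)`, the base permutation of `t₁`. -/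
def oddEvenSwaps (q : ℕ) : Perm ℕ :=
  ((List.range q).map fun i => swap (1 + 2 * i) (2 + 2 * i)).prod

/-- The product `(4,5)(6,7)⋯(2q+2,2q+3)`, the base permutation of `t₂`. -/
def evenOddSwaps (q : ℕ) : Perm ℕ :=
  ((List.range q).map fun i => swap (2 + 2 * (i + 1)) (3 + 2 * (i + 1))).prod

/-- The permutation of `{1, …, n}` underlying `t₁t₂t₃t₄`, where `n = 2k + 5`. -/
def baseCycle (k : ℕ) : Perm ℕ :=
  oddEvenSwaps (k + 2) * evenOddSwaps (k + 1) * (swap 1 3 * swap 2 4) * swap 1 2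

theorem oddEvenSwaps_apply_of_lt {q x : ℕ} (hx : 2 * q < x) : oddEvenSwaps q x = x := by
  refine list_prod_apply_eq_self fun g hg => ?_
  obtain ⟨i, hi, rfl⟩ := List.mem_map.1 hg
  rw [List.mem_range] at hi
  exact swap_apply_of_ne_of_ne (by omega) (by omega)

theorem evenOddSwaps_apply_of_lt {q x : ℕ} (hx : 2 * q + 3 < x) : evenOddSwaps q x = x := by
  refine list_prod_apply_eq_self fun g hg => ?_
  obtain ⟨i, hi, rfl⟩ := List.mem_map.1 hg
  rw [List.mem_range] at hi
  exact swap_apply_of_ne_of_ne (by omega) (by omega)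

theorem baseCycle_apply_of_lt {k x : ℕ} (hx : 2 * k + 5 < x) : baseCycle k x = x := by
  simp only [baseCycle, Perm.mul_apply]
  rw [swap_apply_of_ne_of_ne (a := 1) (b := 2) (by omega) (by omega),
    swap_apply_of_ne_of_ne (a := 2) (b := 4) (by omega) (by omega),
    swap_apply_of_ne_of_ne (a := 1) (b := 3) (by omega) (by omega),
    evenOddSwaps_apply_of_lt (by omega), oddEvenSwaps_apply_of_lt (by omega)]

theorem oddEvenSwaps_succ (q : ℕ) :
    oddEvenSwaps (q + 1) = swap (2 * q + 1) (2 * q + 2) * oddEvenSwaps q := by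
  calc oddEvenSwaps (q + 1) = oddEvenSwaps q * swap (2 * q + 1) (2 * q + 2) := by
        simp [oddEvenSwaps, List.range_succ, add_comm]
    _ = swap (2 * q + 1) (2 * q + 2) * oddEvenSwaps q :=
        commute_swap_of_apply_eq_self (oddEvenSwaps_apply_of_lt (by omega))
          (oddEvenSwaps_apply_of_lt (by omega))

theorem evenOddSwaps_succ (q : ℕ) :
    evenOddSwaps (q + 1) = swap (2 * q + 4) (2 * q + 5) * evenOddSwaps q := by
  calc evenOddSwaps (q + 1) = evenOddSwaps q * swap (2 * q + 4) (2 * q + 5) := by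
        have indices_eq : 2 + 2 * (q + 1) = 2 * q + 4 ∧ 3 + 2 * (q + 1) = 2 * q + 5 := by omega
        simp [evenOddSwaps, List.range_succ, indices_eq]
    _ = swap (2 * q + 4) (2 * q + 5) * evenOddSwaps q :=
        commute_swap_of_apply_eq_self (evenOddSwaps_apply_of_lt (by omega))
          (evenOddSwaps_apply_of_lt (by omega))

theorem baseCycle_succ (k : ℕ) :
    baseCycle (k + 1) =
      swap (2 * k + 7) (2 * k + 6) * (swap (2 * k + 5) (2 * k + 7) * baseCycle k) := by
  have swap_mul_swap_eq : swap (2 * k + 5) (2 * k + 6) * swap (2 * k + 6) (2 * k + 7) =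
      swap (2 * k + 7) (2 * k + 6) * swap (2 * k + 5) (2 * k + 7) := by
    rw [mul_swap_eq_swap_mul (swap (2 * k + 7) (2 * k + 6)),
      swap_apply_of_ne_of_ne (by omega) (by omega), swap_apply_left,
      swap_comm (2 * k + 7) (2 * k + 6)]
  have commute_oddEvenSwaps : Commute (oddEvenSwaps (k + 2)) (swap (2 * k + 6) (2 * k + 7)) :=
    commute_swap_of_apply_eq_self (oddEvenSwaps_apply_of_lt (by omega))
      (oddEvenSwaps_apply_of_lt (by omega))
  calc baseCycle (k + 1)
      = swap (2 * k + 5) (2 * k + 6) * (oddEvenSwaps (k + 2) * swap (2 * k + 6) (2 * k + 7)) *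
          evenOddSwaps (k + 1) * (swap 1 3 * swap 2 4) * swap 1 2 := by
        rw [baseCycle, oddEvenSwaps_succ, evenOddSwaps_succ]
        simp only [mul_add, add_assoc, mul_assoc, Nat.reduceMul, Nat.reduceAdd]
    _ = swap (2 * k + 5) (2 * k + 6) * swap (2 * k + 6) (2 * k + 7) * baseCycle k := by
        rw [commute_oddEvenSwaps.eq, baseCycle]
        simp only [mul_assoc]
    _ = swap (2 * k + 7) (2 * k + 6) * (swap (2 * k + 5) (2 * k + 7) * baseCycle k) := by
        rw [swap_mul_swap_eq, mul_assoc]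

theorem baseCycle_zero : baseCycle 0 = [1, 5, 3, 2, 4].formPerm := by
  have oddEvenSwaps_two : oddEvenSwaps 2 = swap 1 2 * swap 3 4 := by
    simp [oddEvenSwaps, List.range_succ]
  have evenOddSwaps_one : evenOddSwaps 1 = swap 4 5 := by simp [evenOddSwaps]
  ext x
  simp only [baseCycle, zero_add, oddEvenSwaps_two, evenOddSwaps_one,
    List.formPerm_cons_cons, List.formPerm_singleton, Perm.mul_apply, Perm.one_apply,
    swap_apply_def]
  grind

theorem isCycleOn_baseCycle (k : ℕ) : (baseCycle k).IsCycleOn (Finset.Icc 1 (2 * k + 5)) := by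
  induction k with
  | zero =>
    have nodup : [1, 5, 3, 2, 4].Nodup := by decide
    have Icc_eq : (Finset.Icc 1 (2 * 0 + 5) : Set ℕ) = {x | x ∈ [1, 5, 3, 2, 4]} := by
      ext x
      simp only [Finset.coe_Icc, Set.mem_Icc, Set.mem_ofPred_eq, List.mem_cons, List.not_mem_nil,
        or_false]
      omega
    rw [baseCycle_zero, Icc_eq]
    exact nodup.isCycleOn_formPerm
  | succ k ih =>
    have Icc_succ : (Finset.Icc 1 (2 * (k + 1) + 5) : Set ℕ) =
        insert (2 * k + 6) (insert (2 * k + 7) (Finset.Icc 1 (2 * k + 5) : Set ℕ)) := by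
      ext x
      simp only [Finset.coe_Icc, Set.mem_Icc, Set.mem_insert_iff]
      omega
    rw [baseCycle_succ, Icc_succ]
    refine isCycleOn_swap_mul_insert (isCycleOn_swap_mul_insert ih ?_ ?_ ?_) ?_ ?_ ?_
    · simp
    · simp
    · exact baseCycle_apply_of_lt (by omega)
    · simp
    · simp
    · rw [Perm.mul_apply, baseCycle_apply_of_lt (by omega),
        swap_apply_of_ne_of_ne (by omega) (by omega)]

theorem isSignedLift_t1 (k : ℕ) :
    IsSignedLift (2 * k + 5) (t1 (2 * k + 5)) (oddEvenSwaps (k + 2)) 0 := by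
  have length_eq : (2 * k + 5 - 2) / 2 + 1 = k + 2 := by omega
  rw [t1, oddEvenSwaps, length_eq]
  refine .list_prod_map fun i hi => ?_
  rw [List.mem_range] at hi
  simpa only [add_assoc] using
    IsSignedLift.swap_mul_swap (n := 2 * k + 5) (a := 1 + 2 * i) (b := 2 + 2 * i)
      ⟨by omega, by omega⟩ ⟨by omega, by omega⟩

theorem isSignedLift_t2 (k : ℕ) :
    IsSignedLift (2 * k + 5) (t2 (2 * k + 5)) (evenOddSwaps (k + 1)) 0 := by
  have length_eq : (2 * k + 5 - 3) / 2 = k + 1 := by omega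
  rw [t2, evenOddSwaps, length_eq]
  refine .list_prod_map fun i hi => ?_
  rw [List.mem_range] at hi
  simpa only [add_assoc] using
    IsSignedLift.swap_mul_swap (n := 2 * k + 5) (a := 2 + 2 * (i + 1)) (b := 3 + 2 * (i + 1))
      ⟨by omega, by omega⟩ ⟨by omega, by omega⟩

theorem isSignedLift_t3 {n : ℕ} (hn : 4 ≤ n) :
    IsSignedLift n (t3 n) (swap 1 3 * swap 2 4) 0 := by
  have commute_swap : Commute (swap 2 4) (swap (n + 1) (n + 3)) :=
    commute_swap_of_apply_eq_self (swap_apply_of_ne_of_ne (by omega) (by omega))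
      (swap_apply_of_ne_of_ne (by omega) (by omega))
  have t3_eq : t3 n = swap 1 3 * swap (n + 1) (n + 3) * (swap 2 4 * swap (n + 2) (n + 4)) := by
    rw [t3, mul_assoc (swap 1 3), commute_swap.eq]
    simp only [mul_assoc]
  rw [t3_eq]
  exact (IsSignedLift.swap_mul_swap ⟨by omega, by omega⟩ ⟨by omega, by omega⟩).mul_zero
    (.swap_mul_swap ⟨by omega, by omega⟩ ⟨by omega, by omega⟩)

/-- The list `3, …, n` of the indices whose two sheets `t₄` exchanges. -/
def flippedIndices (n : ℕ) : List ℕ := (List.range (n - 2)).map fun j => 2 + (j + 1)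

theorem mem_Icc_of_mem_flippedIndices {n a : ℕ} (ha : a ∈ flippedIndices n) :
    a ∈ Set.Icc 1 n := by
  obtain ⟨j, hj, rfl⟩ := List.mem_map.1 ha
  rw [List.mem_range] at hj
  exact ⟨by omega, by omega⟩

theorem isSignedLift_t4 {n : ℕ} (hn : 2 ≤ n) :
    IsSignedLift n (t4 n) (swap 1 2) fun i => (flippedIndices n).count i := by
  have lift_swap : IsSignedLift n (swap 1 2 * swap (n + 1) (n + 2)) (swap 1 2) 0 :=
    .swap_mul_swap ⟨by omega, by omega⟩ ⟨by omega, by omega⟩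
  simpa only [t4, flippedIndices, List.map_map, Function.comp_def, add_assoc, mul_one] using
    lift_swap.mul_zero (.list_prod_swap_add fun _ => mem_Icc_of_mem_flippedIndices)

theorem sum_count_flippedIndices {n : ℕ} (hn : 2 ≤ n) (hodd : Odd n) :
    ∑ i ∈ Finset.Icc 1 n, ((flippedIndices n).count i : ZMod 2) = 1 := by
  have sum_count : ∑ i ∈ Finset.Icc 1 n, (flippedIndices n).count i = n - 2 := by
    have sum_count_eq_length := Multiset.sum_count_eq_card
      (s := Finset.Icc 1 n) (m := (flippedIndices n : Multiset ℕ))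
      fun a ha => Finset.mem_Icc.2 (mem_Icc_of_mem_flippedIndices (Multiset.mem_coe.1 ha))
    simpa [flippedIndices] using sum_count_eq_length
  have odd_sub_two : Odd (n - 2) := Nat.Odd.sub_even hn hodd even_two
  rw [← Nat.cast_sum, sum_count, ZMod.natCast_eq_one_iff_odd.2 odd_sub_two]

theorem isSignedLift_prod_swap_add (n : ℕ) :
    IsSignedLift n ((List.range n).map fun i => swap (i + 1) (n + (i + 1))).prod 1 1 := by
  have lift_map : IsSignedLift n (((List.range n).map (· + 1)).map fun a => swap a (n + a)).prod 1
      fun i => ((List.range n).map (· + 1)).count i :=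
    .list_prod_swap_add fun a ha => by
      obtain ⟨j, hj, rfl⟩ := List.mem_map.1 ha
      exact ⟨by omega, List.mem_range.1 hj⟩
  rw [List.map_map] at lift_map
  refine lift_map.congr_sign fun i ⟨one_le, le_n⟩ => ?_
  have nodup_map : ((List.range n).map (· + 1)).Nodup :=
    List.nodup_range.map (add_left_injective 1)
  have mem_map : i ∈ (List.range n).map (· + 1) :=
    List.mem_map.2 ⟨i - 1, List.mem_range.2 (by omega), Nat.sub_add_cancel one_le⟩
  simp [List.count_eq_one_of_mem nodup_map mem_map]

/-- For odd `n ≥ 5`, `(t₁t₂t₃t₄)ⁿ = ∏_{i=1}^{n} (i, n+i)`. -/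
theorem t1t2t3t4_pow_n (n : ℕ) (hn : 5 ≤ n) (hodd : Odd n) :
    (t1 n * t2 n * t3 n * t4 n) ^ n =
      ((List.range n).map (fun i => Equiv.swap (i+1) (n+(i+1)))).prod := by
  have ⟨q, hq⟩ := hodd
  obtain ⟨k, rfl⟩ : ∃ k, n = 2 * k + 5 := ⟨q - 2, by omega⟩
  have lift_mul := (((isSignedLift_t1 k).mul_zero (isSignedLift_t2 k)).mul_zero
    (isSignedLift_t3 (by omega))).mul_zero (isSignedLift_t4 (by omega))
  refine lift_mul.pow_eq_of_isCycleOn (isCycleOn_baseCycle k) ?_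
  rw [sum_count_flippedIndices (by omega) hodd]
  exact isSignedLift_prod_swap_add (2 * k + 5)
end

section
/- Let n ≥ 5 be odd. The group G = ⟨t₁, t₂, t₃, t₄⟩ ≤ Sym(2n), with t₁, t₂, t₃, t₄ as defined, is isomorphic to the Coxeter group of type Bₙ, i.e., to the hyperoctahedral group ℤ₂ ≀ Sym(n) of order 2ⁿ·n!. -/
open Equiv

/-- `β₀ = (1,n+1)` and `βᵢ = (i,i+1)(n+i,n+i+1)` for `1 ≤ i < n`. -/
def β (n i : ℕ) : Equiv.Perm ℕ :=
  if i = 0 then Equiv.swap 1 (n+1)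
  else Equiv.swap i (i+1) * Equiv.swap (n+i) (n+i+1)

/-- The realization of the Coxeter group of type `Bₙ` inside `Sym(2n)`,
generated by `β₀, β₁, …, β_{n-1}`. -/
def Bgrp (n : ℕ) : Subgroup (Equiv.Perm ℕ) :=
  Subgroup.closure {x | ∃ i < n, x = β n i}

/-! Signed permutations of `n` points act faithfully on the labels `1, …, 2n`, and the groups
`⟨t₁, t₂, t₃, t₄⟩` and `⟨β₀, …, βₙ₋₁⟩` are both the image of the whole hyperoctahedral group.

Write `x₀, …, x₂ₖ₊₂` for the `n = 2k + 3` points. The product `t₁t₂` is the transposition `(x₀ x₁)`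
times a cycle of odd length `2k + 1` on the remaining points, so its `(2k + 1)`-st power is
`(x₀ x₁)`. Conjugation by the cycle and by `t₃` yields all transpositions. Then `t₄` leaves a sign
vector with an odd number of entries `-1` and at least one entry `1`. Multiplied by its image under
the transposition of two entries of opposite sign, it gives the vectors with exactly two entries
`-1`; modulo these, it is a single sign change. -/

section TranspositionsInSubgroups

variable {α : Type*} {a b : α}

lemma pow_apply_eq_self_of_sameCycle {g : Perm α} {N : ℕ} (ha : (g ^ N) a = a)
    (hab : g.SameCycle a b) : (g ^ N) b = b := by
  obtain ⟨i, rfl⟩ := hab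
  rw [← Perm.mul_apply, ((Commute.refl g).pow_left N).zpow_right i, Perm.mul_apply, ha]

variable [DecidableEq α] {K : Subgroup (Perm α)} {g : Perm α}

lemma swap_apply_mem (hg : g ∈ K) (hab : swap a b ∈ K) : swap (g a) (g b) ∈ K := by
  rw [swap_apply_apply]
  exact K.mul_mem (K.mul_mem hg hab) (K.inv_mem hg)

lemma swap_mem_of_sameCycle (hg : g ∈ K) (ha : swap a (g a) ∈ K) (hab : g.SameCycle a b) :
    swap a b ∈ K := by
  have step (i : ℤ) : swap ((g ^ i) a) ((g ^ (i + 1)) a) ∈ K := by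
    rw [zpow_add_one, Perm.mul_apply]
    exact swap_apply_mem (K.zpow_mem hg i) ha
  obtain ⟨i, rfl⟩ := hab
  induction i with
  | zero => exact swap_self a ▸ K.one_mem
  | succ i ih => exact SubmonoidClass.swap_mem_trans K ih (step i)
  | pred i ih =>
    have back := step (-i - 1)
    rw [sub_add_cancel, swap_comm] at back
    exact SubmonoidClass.swap_mem_trans K ih back

lemma eq_top_of_forall_swap_mem [Finite α] (a : α) (h : ∀ b, swap a b ∈ K) : K = ⊤ := by
  rw [eq_top_iff, ← Perm.closure_isSwap, Subgroup.closure_le]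
  rintro _ ⟨b, c, -, rfl⟩
  exact SubmonoidClass.swap_mem_trans K (swap_comm a b ▸ h b) (h c)

end TranspositionsInSubgroups

section Zigzag

variable {α : Type*}

lemma injOn_shift {x : ℕ → α} {m : ℕ} (hx : Set.InjOn x (Set.Iic m)) {c l : ℕ}
    (h : l + c ≤ m) : Set.InjOn (fun i => x (i + c)) (Set.Iic l) :=
  hx.comp (add_left_injective c).injOn fun i (hi : i ≤ l) =>
    show i + c ≤ m by omega

variable [DecidableEq α]

/-- The product of the transpositions `(x₀ x₁)(x₂ x₃)⋯(x₂ₖ₋₂ x₂ₖ₋₁)`, a matching of consecutive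
terms of the sequence `x`. -/
def pairSwaps (x : ℕ → α) (k : ℕ) : Perm α :=
  ((List.range k).map fun i => swap (x (2 * i)) (x (2 * i + 1))).prod

/-- The product of the two matchings of the path `x₀, x₁, …, x₂ₖ`. When these points are distinct,
it is the cycle of odd length `2k + 1` that visits the odd positions in increasing order and
returns through the even positions in decreasing order. -/
def zigzag (x : ℕ → α) (k : ℕ) : Perm α :=
  pairSwaps x k * pairSwaps (fun i => x (i + 1)) k

variable {x : ℕ → α} {k : ℕ}

lemma pairSwaps_succ (x : ℕ → α) (k : ℕ) :
    pairSwaps x (k + 1) = pairSwaps x k * swap (x (2 * k)) (x (2 * k + 1)) := by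
  simp [pairSwaps, List.range_succ]

lemma pairSwaps_succ' (x : ℕ → α) (k : ℕ) :
    pairSwaps x (k + 1) = swap (x 0) (x 1) * pairSwaps (fun i => x (i + 2)) k := by
  simp [pairSwaps, List.range_succ_eq_map, Function.comp_def, mul_add, add_right_comm]

lemma pairSwaps_apply_of_forall_ne {y : α} (hy : ∀ i < 2 * k, y ≠ x i) :
    pairSwaps x k y = y := by
  induction k with
  | zero => rfl
  | succ k ih =>
    rw [pairSwaps_succ, Perm.mul_apply,
      swap_apply_of_ne_of_ne (hy _ (by omega)) (hy _ (by omega)), ih fun i hi => hy i (by omega)]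

lemma pairSwaps_apply_of_le {j : ℕ} (hx : Set.InjOn x (Set.Iic j)) (hj : 2 * k ≤ j) :
    pairSwaps x k (x j) = x j :=
  pairSwaps_apply_of_forall_ne fun i hi =>
    hx.ne (le_refl j) (show i ≤ j by omega) (by omega)

lemma pairSwaps_apply_even {i m : ℕ} (hx : Set.InjOn x (Set.Iic m)) (hm : 2 * k ≤ m + 1)
    (hi : i < k) : pairSwaps x k (x (2 * i)) = x (2 * i + 1) := by
  induction k with
  | zero => omega
  | succ k ih =>
    have ne {j l : ℕ} (hj : j ≤ m) (hl : l ≤ m) (h : j ≠ l) : x j ≠ x l := hx.ne hj hl h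
    rw [pairSwaps_succ, Perm.mul_apply]
    obtain rfl | hlt := (Nat.lt_succ_iff.mp hi).eq_or_lt
    · rw [swap_apply_left, pairSwaps_apply_of_le (hx.mono (Set.Iic_subset_Iic.mpr ?_))] <;> omega
    · rw [swap_apply_of_ne_of_ne (ne ?_ ?_ ?_) (ne ?_ ?_ ?_), ih] <;> omega

lemma pairSwaps_apply_odd {i m : ℕ} (hx : Set.InjOn x (Set.Iic m)) (hm : 2 * k ≤ m + 1)
    (hi : i < k) : pairSwaps x k (x (2 * i + 1)) = x (2 * i) := by
  induction k with
  | zero => omega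
  | succ k ih =>
    have ne {j l : ℕ} (hj : j ≤ m) (hl : l ≤ m) (h : j ≠ l) : x j ≠ x l := hx.ne hj hl h
    rw [pairSwaps_succ, Perm.mul_apply]
    obtain rfl | hlt := (Nat.lt_succ_iff.mp hi).eq_or_lt
    · rw [swap_apply_right, pairSwaps_apply_of_le (hx.mono (Set.Iic_subset_Iic.mpr ?_))] <;> omega
    · rw [swap_apply_of_ne_of_ne (ne ?_ ?_ ?_) (ne ?_ ?_ ?_), ih] <;> omega

lemma zigzag_apply_of_forall_ne {y : α} (hy : ∀ i ≤ 2 * k, y ≠ x i) : zigzag x k y = y := by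
  rw [zigzag, Perm.mul_apply, pairSwaps_apply_of_forall_ne fun i hi => hy (i + 1) (by omega),
    pairSwaps_apply_of_forall_ne fun i hi => hy i (by omega)]

lemma zigzag_apply_zero (hx : Set.InjOn x (Set.Iic (2 * k))) (hk : 0 < k) :
    zigzag x k (x 0) = x 1 := by
  have fixed : pairSwaps (fun i => x (i + 1)) k (x 0) = x 0 :=
    pairSwaps_apply_of_forall_ne fun i hi =>
      hx.ne (Nat.zero_le _) (show i + 1 ≤ 2 * k by omega) (by omega)
  rw [zigzag, Perm.mul_apply, fixed]
  exact pairSwaps_apply_even hx (by omega) hk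

lemma pairSwaps_shift_apply_odd (hx : Set.InjOn x (Set.Iic (2 * k))) {i : ℕ} (hi : i < k) :
    pairSwaps (fun i => x (i + 1)) k (x (2 * i + 1)) = x (2 * (i + 1)) :=
  pairSwaps_apply_even (injOn_shift hx (c := 1) (l := 2 * k - 1) (by omega)) (by omega) hi

lemma zigzag_apply_even (hx : Set.InjOn x (Set.Iic (2 * k))) {i : ℕ} (hi : i < k) :
    zigzag x k (x (2 * (i + 1))) = x (2 * i) := by
  have back := pairSwaps_apply_odd (injOn_shift hx (c := 1) (l := 2 * k - 1) (by omega))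
    (by omega) hi
  rw [zigzag, Perm.mul_apply]
  exact (congrArg _ back).trans (pairSwaps_apply_odd hx (by omega) hi)

lemma zigzag_apply_odd (hx : Set.InjOn x (Set.Iic (2 * k))) {i : ℕ} (hi : i + 1 < k) :
    zigzag x k (x (2 * i + 1)) = x (2 * (i + 1) + 1) := by
  rw [zigzag, Perm.mul_apply, pairSwaps_shift_apply_odd hx (by omega),
    pairSwaps_apply_even hx (by omega) hi]

lemma zigzag_apply_last_odd (hx : Set.InjOn x (Set.Iic (2 * (k + 1)))) :
    zigzag x (k + 1) (x (2 * k + 1)) = x (2 * (k + 1)) := by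
  rw [zigzag, Perm.mul_apply, pairSwaps_shift_apply_odd hx k.lt_succ_self,
    pairSwaps_apply_of_le hx le_rfl]

lemma zigzag_pow_apply_zero (hx : Set.InjOn x (Set.Iic (2 * k))) {i : ℕ} (hi : i < k) :
    (zigzag x k ^ (i + 1)) (x 0) = x (2 * i + 1) := by
  induction i with
  | zero => rw [zero_add, pow_one, zigzag_apply_zero hx hi]
  | succ i ih => rw [pow_succ', Perm.mul_apply, ih (by omega), zigzag_apply_odd hx hi]

lemma zigzag_pow_apply_even (hx : Set.InjOn x (Set.Iic (2 * k))) {i : ℕ} (hi : i ≤ k) :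
    (zigzag x k ^ i) (x (2 * i)) = x 0 := by
  induction i with
  | zero => rfl
  | succ i ih => rw [pow_succ, Perm.mul_apply, zigzag_apply_even hx hi, ih (by omega)]

lemma zigzag_sameCycle (hx : Set.InjOn x (Set.Iic (2 * k))) {j : ℕ} (hj : j ≤ 2 * k) :
    (zigzag x k).SameCycle (x 0) (x j) := by
  obtain ⟨i, rfl | rfl⟩ := j.even_or_odd'
  · rw [← zigzag_pow_apply_even hx (i := i) (by omega), Perm.sameCycle_pow_left]
  · rw [← zigzag_pow_apply_zero hx (i := i) (by omega), Perm.sameCycle_pow_right]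

lemma zigzag_pow_eq_one (hx : Set.InjOn x (Set.Iic (2 * k))) : zigzag x k ^ (2 * k + 1) = 1 := by
  have period : (zigzag x k ^ (2 * k + 1)) (x 0) = x 0 := by
    obtain _ | k := k
    · rfl
    rw [show 2 * (k + 1) + 1 = k + 1 + (1 + (k + 1)) by omega, pow_add _ (k + 1) _,
      pow_add _ 1, Perm.mul_apply, Perm.mul_apply, zigzag_pow_apply_zero hx k.lt_succ_self,
      pow_one, zigzag_apply_last_odd hx, zigzag_pow_apply_even hx le_rfl]
  ext y
  by_cases hy : ∃ j ≤ 2 * k, y = x j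
  · obtain ⟨j, hj, rfl⟩ := hy
    exact pow_apply_eq_self_of_sameCycle period (zigzag_sameCycle hx hj)
  · push Not at hy
    exact Perm.pow_apply_eq_self_of_apply_eq_self (zigzag_apply_of_forall_ne hy) _

lemma pairSwaps_mul_pairSwaps_pow (hx : Set.InjOn x (Set.Iic (2 * k + 2))) :
    (pairSwaps x (k + 1) * pairSwaps (fun i => x (i + 3)) k) ^ (2 * k + 1) =
      swap (x 0) (x 1) := by
  have split : pairSwaps x (k + 1) * pairSwaps (fun i => x (i + 3)) k =
      swap (x 0) (x 1) * zigzag (fun i => x (i + 2)) k := by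
    rw [pairSwaps_succ', mul_assoc, zigzag]
  have fixed {j : ℕ} (hj : j < 2) : zigzag (fun i => x (i + 2)) k (x j) = x j :=
    zigzag_apply_of_forall_ne fun i hi =>
      hx.ne (show j ≤ 2 * k + 2 by omega) (show i + 2 ≤ 2 * k + 2 by omega) (by omega)
  have commute : Commute (swap (x 0) (x 1)) (zigzag (fun i => x (i + 2)) k) := by
    rw [commute_iff_eq, mul_swap_eq_swap_mul, fixed two_pos, fixed one_lt_two]
  rw [split, commute.mul_pow, zigzag_pow_eq_one (injOn_shift hx le_rfl), mul_one, pow_succ,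
    pow_mul, sq, swap_mul_self, one_pow, one_mul]

theorem eq_top_of_pairSwaps_mem [Finite α] {K : Subgroup (Perm α)}
    (hx : Set.InjOn x (Set.Iic (2 * k + 2))) (hsurj : ∀ y, ∃ j ≤ 2 * k + 2, x j = y) (hk : 0 < k)
    (h₁ : pairSwaps x (k + 1) ∈ K) (h₂ : pairSwaps (fun i => x (i + 3)) k ∈ K)
    (h₃ : swap (x 0) (x 2) * swap (x 1) (x 3) ∈ K) : K = ⊤ := by
  have ne {j l : ℕ} (hj : j ≤ 4) (hl : l ≤ 4) (h : j ≠ l) : x j ≠ x l :=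
    hx.ne (show j ≤ 2 * k + 2 by omega) (show l ≤ 2 * k + 2 by omega) h
  have swap01 : swap (x 0) (x 1) ∈ K :=
    pairSwaps_mul_pairSwaps_pow hx ▸ K.pow_mem (K.mul_mem h₁ h₂) _
  have cycle : zigzag (fun i => x (i + 2)) k ∈ K := by
    rw [pairSwaps_succ', K.mul_mem_cancel_left swap01] at h₁
    exact K.mul_mem h₁ h₂
  have swap23 : swap (x 2) (x 3) ∈ K := by
    simpa [swap_apply_of_ne_of_ne, ne] using swap_apply_mem h₃ swap01
  have tail {j : ℕ} (hj : j ≤ 2 * k) : swap (x 2) (x (j + 2)) ∈ K :=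
    swap_mem_of_sameCycle cycle ((zigzag_apply_zero (injOn_shift hx le_rfl) hk).symm ▸ swap23)
      (zigzag_sameCycle (injOn_shift hx le_rfl) hj)
  have swap04 : swap (x 0) (x 4) ∈ K := by
    simpa [swap_apply_of_ne_of_ne, ne] using swap_apply_mem h₃ (tail (j := 2) (by omega))
  have swap20 : swap (x 2) (x 0) ∈ K :=
    SubmonoidClass.swap_mem_trans K (tail (j := 2) (by omega)) (swap_comm (x 0) (x 4) ▸ swap04)
  refine eq_top_of_forall_swap_mem (x 2) fun y => ?_
  obtain ⟨j, hj, rfl⟩ := hsurj y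
  match j with
  | 0 => exact swap20
  | 1 => exact SubmonoidClass.swap_mem_trans K swap20 swap01
  | j + 2 => exact tail (by omega)

end Zigzag

/-- The hyperoctahedral group `ℤ₂ ≀ Sym(α)`, the group of signed permutations of `α`: a pair of a
sign vector `α → ℤˣ` and a permutation of `α`, which acts on sign vectors by permuting their
entries. -/
abbrev Hyperoctahedral (α : Type*) : Type _ := (α → ℤˣ) ⋊[mulAutArrow] Perm α

namespace Hyperoctahedral

open SemidirectProduct

variable {α : Type*}

lemma card [Finite α] :
    Nat.card (Hyperoctahedral α) = 2 ^ Nat.card α * (Nat.card α).factorial := by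
  rw [SemidirectProduct.card, Nat.card_fun, Nat.card_perm, Nat.card_eq_fintype_card (α := ℤˣ),
    Fintype.card_units_int]

section Generation

variable {K : Subgroup (Hyperoctahedral α)}

lemma inl_comp_mem (hperm : ∀ σ, inr σ ∈ K) {f : α → ℤˣ} (hf : inl f ∈ K) (σ : Perm α) :
    inl (f ∘ σ) ∈ K := by
  have conj : (inl (f ∘ σ) : Hyperoctahedral α) = inr σ⁻¹ * inl f * inr σ :=
    inl_aut_inv (φ := mulAutArrow) σ f
  rw [conj]
  exact K.mul_mem (K.mul_mem (hperm _) hf) (hperm _)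

lemma eq_top_of_inl_mulSingle_mem [DecidableEq α] [Finite α] (hperm : ∀ σ, inr σ ∈ K) {a : α}
    (ha : inl (Pi.mulSingle a (-1)) ∈ K) : K = ⊤ := by
  have single (b : α) (s : ℤˣ) : Pi.mulSingle b s ∈ K.comap inl := by
    obtain rfl | rfl := Int.units_eq_one_or s
    · rw [Pi.mulSingle_one]
      exact one_mem _
    · rw [Subgroup.mem_comap, ← swap_apply_left a b, ← symm_swap, ← Pi.mulSingle_comp_equiv]
      exact inl_comp_mem hperm ha _
  refine eq_top_iff.mpr fun g _ => ?_
  rw [← inl_left_mul_inr_right g]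
  exact K.mul_mem (Subgroup.pi_mem_of_mulSingle_mem g.left fun b => single b _) (hperm _)

lemma inl_mulSingle_mul_mulSingle_mem [DecidableEq α] (hperm : ∀ σ, inr σ ∈ K) {f : α → ℤˣ}
    (hf : inl f ∈ K) {a b : α} (ha : f a = 1) (hb : f b = -1) (i : α) (s : ℤˣ) :
    inl (Pi.mulSingle i s * Pi.mulSingle a s) ∈ K := by
  have hab : a ≠ b := fun h => by simp [h, hb] at ha
  obtain rfl | rfl := Int.units_eq_one_or s
  · simpa only [Pi.mulSingle_one, one_mul, map_one] using K.one_mem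
  obtain rfl | hia := eq_or_ne i a
  · simpa only [← Pi.mulSingle_mul, neg_mul_neg, one_mul, Pi.mulSingle_one, map_one] using K.one_mem
  have transpose : Pi.mulSingle b (-1) * Pi.mulSingle a (-1) = f * f ∘ swap a b := by
    ext1 j
    obtain rfl | hja := eq_or_ne j a
    · simp [ha, hb, hab]
    obtain rfl | hjb := eq_or_ne j b
    · simp [ha, hb, hja]
    simp [hja, hjb, swap_apply_of_ne_of_ne]
  have mem_ab : inl (Pi.mulSingle b (-1) * Pi.mulSingle a (-1)) ∈ K := by
    rw [transpose, map_mul]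
    exact K.mul_mem hf (inl_comp_mem hperm hf _)
  have move : (Pi.mulSingle b (-1) * Pi.mulSingle a (-1) : α → ℤˣ) ∘ swap b i =
      Pi.mulSingle i (-1) * Pi.mulSingle a (-1) := by
    rw [Pi.mul_comp, Pi.mulSingle_comp_equiv, Pi.mulSingle_comp_equiv, symm_swap, swap_apply_left,
      swap_apply_of_ne_of_ne hab hia.symm]
  exact move ▸ inl_comp_mem hperm mem_ab (swap b i)

theorem eq_top_of_inl_mem_of_prod_eq_neg_one [Fintype α] (hperm : ∀ σ, inr σ ∈ K) {f : α → ℤˣ}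
    (hf : inl f ∈ K) (hprod : ∏ i, f i = -1) {a b : α} (ha : f a = 1) (hb : f b = -1) :
    K = ⊤ := by
  classical
  have collect : f * Pi.mulSingle a (-1) = ∏ i, Pi.mulSingle i (f i) * Pi.mulSingle a (f i) := by
    rw [Finset.prod_mul_distrib, Finset.univ_prod_mulSingle, ← hprod]
    congr 1
    exact map_prod (MonoidHom.mulSingle (fun _ : α => ℤˣ) a) f Finset.univ
  have mem_mul : f * Pi.mulSingle a (-1) ∈ K.comap inl :=
    collect ▸ Subgroup.prod_mem _ fun i _ =>
      inl_mulSingle_mul_mulSingle_mem hperm hf ha hb i (f i)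
  exact eq_top_of_inl_mulSingle_mem hperm (((K.comap inl).mul_mem_cancel_left hf).1 mem_mul)

end Generation

section SignChanges

variable [DecidableEq α]

/-- The sign vector that changes the signs of `x₀, x₁, …, xₗ₋₁`. -/
def signChanges (x : ℕ → α) (l : ℕ) : α → ℤˣ :=
  ((List.range l).map fun i => Pi.mulSingle (x i) (-1)).prod

variable {x : ℕ → α} {l : ℕ}

lemma signChanges_apply (x : ℕ → α) (l : ℕ) (a : α) :
    signChanges x l a = ∏ i ∈ Finset.range l, (Pi.mulSingle (x i) (-1) : α → ℤˣ) a :=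
  Finset.prod_apply a (Finset.range l) fun i => (Pi.mulSingle (x i) (-1) : α → ℤˣ)

lemma signChanges_apply_of_forall_ne {a : α} (ha : ∀ i < l, a ≠ x i) : signChanges x l a = 1 := by
  rw [signChanges_apply]
  exact Finset.prod_eq_one fun i hi => Pi.mulSingle_eq_of_ne (ha i (Finset.mem_range.mp hi)) _

lemma signChanges_apply_zero (hx : Set.InjOn x (Set.Iic l)) :
    signChanges x (l + 1) (x 0) = -1 := by
  rw [signChanges_apply, Finset.prod_range_succ', Pi.mulSingle_eq_same, mul_eq_right]
  exact Finset.prod_eq_one fun i hi => Pi.mulSingle_eq_of_ne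
    (hx.ne (Nat.zero_le _) (Finset.mem_range.mp hi) i.succ_ne_zero.symm) _

lemma prod_signChanges [Fintype α] (x : ℕ → α) (l : ℕ) : ∏ a, signChanges x l a = (-1) ^ l := by
  simp_rw [signChanges_apply]
  rw [Finset.prod_comm]
  simp

theorem eq_top_of_pairSwaps_signChanges_mem [Finite α] {K : Subgroup (Hyperoctahedral α)} {k : ℕ}
    (hx : Set.InjOn x (Set.Iic (2 * k + 2))) (hsurj : ∀ y, ∃ j ≤ 2 * k + 2, x j = y) (hk : 0 < k)
    (h₁ : inr (pairSwaps x (k + 1)) ∈ K) (h₂ : inr (pairSwaps (fun i => x (i + 3)) k) ∈ K)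
    (h₃ : inr (swap (x 0) (x 2) * swap (x 1) (x 3)) ∈ K)
    (h₄ : inr (swap (x 0) (x 1)) * inl (signChanges (fun i => x (i + 2)) (2 * k + 1)) ∈ K) :
    K = ⊤ := by
  cases nonempty_fintype α
  have comap_inr : K.comap inr = ⊤ := eq_top_of_pairSwaps_mem hx hsurj hk h₁ h₂ h₃
  have hperm (σ : Perm α) : inr σ ∈ K := (Subgroup.eq_top_iff' _).mp comap_inr σ
  refine eq_top_of_inl_mem_of_prod_eq_neg_one hperm ((K.mul_mem_cancel_left (hperm _)).mp h₄)
    ?_ (a := x 0) (b := x 2) ?_ (signChanges_apply_zero (injOn_shift hx le_rfl))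
  · rw [prod_signChanges, Odd.neg_one_pow (odd_two_mul_add_one k)]
  · exact signChanges_apply_of_forall_ne fun i hi =>
      hx.ne (Nat.zero_le _) (show i + 2 ≤ 2 * k + 2 by omega) (by omega)

end SignChanges

section Representation

variable (α) in
/-- The action of signed permutations on the signed points `α × ℤˣ`, in which `g` carries the
point `a` to `g.right a` and multiplies its sign by the entry of `g.left` there. -/
def signedPerm : Hyperoctahedral α →* Perm (α × ℤˣ) :=
  MonoidHom.toHomPerm
    { toFun g p := (g.right p.1, g.left (g.right p.1) * p.2)
      map_one' := funext fun p => Prod.ext rfl (one_mul p.2)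
      map_mul' g h := funext fun p => Prod.ext rfl <|
        show g.left (g.right (h.right p.1)) * h.left (g.right.symm (g.right (h.right p.1))) * p.2 =
          g.left (g.right (h.right p.1)) * (h.left (h.right p.1) * p.2) by
        rw [symm_apply_apply, mul_assoc] }

lemma signedPerm_apply (g : Hyperoctahedral α) (p : α × ℤˣ) :
    signedPerm α g p = (g.right p.1, g.left (g.right p.1) * p.2) := rfl

lemma signedPerm_injective : Function.Injective (signedPerm α) := by
  intro g h hgh
  have apply_eq (i : α) := Prod.ext_iff.mp (congrArg (fun e : Perm (α × ℤˣ) => e (i, 1)) hgh)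
  simp only [signedPerm_apply, mul_one] at apply_eq
  have right_eq : g.right = h.right := Equiv.ext fun i => (apply_eq i).1
  refine SemidirectProduct.ext (funext fun i => ?_) right_eq
  simpa [← right_eq] using (apply_eq (g.right⁻¹ i)).2

variable [DecidableEq α]

lemma signedPerm_inl_mulSingle (i : α) :
    signedPerm α (inl (Pi.mulSingle i (-1))) = swap (i, 1) (i, -1) := by
  ext1 ⟨j, s⟩
  rw [signedPerm_apply]
  obtain rfl | hj := eq_or_ne j i
  · obtain rfl | rfl := Int.units_eq_one_or s <;> simp
  · simp [hj, swap_apply_of_ne_of_ne]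

lemma signedPerm_inr_swap (i j : α) :
    signedPerm α (inr (swap i j)) = swap (i, 1) (j, 1) * swap (i, -1) (j, -1) := by
  have sign_ne : (1 : ℤˣ) ≠ -1 := by decide
  ext1 ⟨l, s⟩
  rw [signedPerm_apply, left_inr, right_inr, Pi.one_apply, one_mul, Perm.mul_apply]
  obtain rfl | hi := eq_or_ne l i
  · obtain rfl | rfl := Int.units_eq_one_or s <;>
      simp [swap_apply_of_ne_of_ne, sign_ne, sign_ne.symm]
  obtain rfl | hj := eq_or_ne l j
  · obtain rfl | rfl := Int.units_eq_one_or s <;>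
      simp [swap_apply_of_ne_of_ne, sign_ne, sign_ne.symm]
  simp [swap_apply_of_ne_of_ne, hi, hj]

end Representation

end Hyperoctahedral

section Coordinates

lemma viaEmbeddingHom_swap {α γ : Type*} [DecidableEq α] [DecidableEq γ] (ι : α ↪ γ) (a b : α) :
    Perm.viaEmbeddingHom ι (swap a b) = swap (ι a) (ι b) := by
  ext1 y
  rw [Perm.viaEmbeddingHom_apply]
  by_cases hy : y ∈ Set.range ι
  · obtain ⟨c, rfl⟩ := hy
    rw [Perm.viaEmbedding_apply, ι.injective.map_swap]
  · rw [Perm.viaEmbedding_apply_of_notMem _ _ _ hy,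
      swap_apply_of_ne_of_ne (fun h => hy ⟨a, h.symm⟩) fun h => hy ⟨b, h.symm⟩]

/-- The labelling of the signed points of `Fin n` by `1, …, 2n`: the `i`-th point is labelled
`i + 1` with sign `1` and `n + i + 1` with sign `-1`. -/
def signedPoint (n : ℕ) : Fin n × ℤˣ ↪ ℕ where
  toFun p := if p.2 = 1 then p.1 + 1 else n + (p.1 + 1)
  inj' := by
    rintro ⟨i, s⟩ ⟨j, t⟩ h
    obtain rfl | rfl := Int.units_eq_one_or s <;> obtain rfl | rfl := Int.units_eq_one_or t <;>
      grind

lemma signedPoint_one {n : ℕ} (i : Fin n) : signedPoint n (i, 1) = i + 1 := rfl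

lemma signedPoint_neg_one {n : ℕ} (i : Fin n) : signedPoint n (i, -1) = n + (i + 1) := rfl

/-- The hyperoctahedral group as permutations of the labels `1, …, 2n`. -/
noncomputable def toPermNat (n : ℕ) : Hyperoctahedral (Fin n) →* Perm ℕ :=
  (Perm.viaEmbeddingHom (signedPoint n)).comp (Hyperoctahedral.signedPerm (Fin n))

lemma toPermNat_injective (n : ℕ) : Function.Injective (toPermNat n) :=
  (Perm.viaEmbeddingHom_injective _).comp Hyperoctahedral.signedPerm_injective

lemma card_range_toPermNat (n : ℕ) : Nat.card (toPermNat n).range = 2 ^ n * n.factorial := by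
  rw [← Nat.card_congr (MonoidHom.ofInjective (toPermNat_injective n)).toEquiv,
    Hyperoctahedral.card, Nat.card_fin]

open SemidirectProduct

lemma toPermNat_inr_swap {n : ℕ} (i j : Fin n) :
    toPermNat n (inr (swap i j)) =
      swap (i + 1 : ℕ) (j + 1) * swap (n + (i + 1)) (n + (j + 1)) := by
  rw [toPermNat, MonoidHom.comp_apply, Hyperoctahedral.signedPerm_inr_swap, map_mul,
    viaEmbeddingHom_swap, viaEmbeddingHom_swap]
  simp only [signedPoint_one, signedPoint_neg_one]

lemma toPermNat_inl_mulSingle {n : ℕ} (i : Fin n) :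
    toPermNat n (inl (Pi.mulSingle i (-1))) = swap (i + 1 : ℕ) (n + (i + 1)) := by
  rw [toPermNat, MonoidHom.comp_apply, Hyperoctahedral.signedPerm_inl_mulSingle,
    viaEmbeddingHom_swap]
  simp only [signedPoint_one, signedPoint_neg_one]

variable {n : ℕ} [NeZero n]

lemma toPermNat_inr_swap_ofNat {i j : ℕ} (hi : i < n) (hj : j < n) :
    toPermNat n (inr (swap (Fin.ofNat n i) (Fin.ofNat n j))) =
      swap (i + 1) (j + 1) * swap (n + (i + 1)) (n + (j + 1)) := by
  rw [toPermNat_inr_swap, Fin.val_ofNat, Fin.val_ofNat, Nat.mod_eq_of_lt hi, Nat.mod_eq_of_lt hj]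

lemma toPermNat_inl_mulSingle_ofNat {i : ℕ} (hi : i < n) :
    toPermNat n (inl (Pi.mulSingle (Fin.ofNat n i) (-1))) = swap (i + 1) (n + (i + 1)) := by
  rw [toPermNat_inl_mulSingle, Fin.val_ofNat, Nat.mod_eq_of_lt hi]

lemma toPermNat_inr_pairSwaps {c k : ℕ} (h : 2 * k + c ≤ n) :
    toPermNat n (inr (pairSwaps (fun i => Fin.ofNat n (i + c)) k)) =
      ((List.range k).map fun i => swap (2 * i + c + 1) (2 * i + 1 + c + 1) *
        swap (n + (2 * i + c + 1)) (n + (2 * i + 1 + c + 1))).prod := by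
  rw [pairSwaps, map_list_prod, map_list_prod, List.map_map, List.map_map]
  refine congrArg List.prod (List.map_congr_left fun i hi => ?_)
  have hik : i < k := List.mem_range.mp hi
  exact toPermNat_inr_swap_ofNat (by omega) (by omega)

lemma toPermNat_inl_signChanges {c l : ℕ} (h : l + c ≤ n) :
    toPermNat n (inl (Hyperoctahedral.signChanges (fun i => Fin.ofNat n (i + c)) l)) =
      ((List.range l).map fun i => swap (i + c + 1) (n + (i + c + 1))).prod := by
  rw [Hyperoctahedral.signChanges, map_list_prod, map_list_prod, List.map_map, List.map_map]
  refine congrArg List.prod (List.map_congr_left fun i hi => ?_)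
  have hil : i < l := List.mem_range.mp hi
  exact toPermNat_inl_mulSingle_ofNat (by omega)

end Coordinates

section Generators

open SemidirectProduct

lemma range_le_of_comap_eq_top {G H : Type*} [Group G] [Group H] {f : G →* H} {K : Subgroup H}
    (h : K.comap f = ⊤) : f.range ≤ K := by
  rw [MonoidHom.range_eq_map, Subgroup.map_le_iff_le_comap, h]

lemma injOn_ofNat {n : ℕ} [NeZero n] : Set.InjOn (Fin.ofNat n) (Set.Iio n) := by
  intro i (hi : i < n) j (hj : j < n) h
  simpa [Nat.mod_eq_of_lt, hi, hj] using congrArg Fin.val h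

variable {n : ℕ} [NeZero n]

lemma t1_eq_toPermNat (hn : 2 ≤ n) :
    t1 n = toPermNat n (inr (pairSwaps (Fin.ofNat n) ((n - 2) / 2 + 1))) := by
  rw [t1]
  refine Eq.trans ?_ (toPermNat_inr_pairSwaps (c := 0) (by omega)).symm
  congr! 5 <;> omega

lemma t2_eq_toPermNat (hn : 3 ≤ n) :
    t2 n = toPermNat n (inr (pairSwaps (fun i => Fin.ofNat n (i + 3)) ((n - 3) / 2))) := by
  rw [t2, toPermNat_inr_pairSwaps (by omega)]
  congr! 5 <;> omega

lemma t3_eq_toPermNat (hn : 4 ≤ n) :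
    t3 n = toPermNat n (inr
      (swap (Fin.ofNat n 0) (Fin.ofNat n 2) * swap (Fin.ofNat n 1) (Fin.ofNat n 3))) := by
  have commute : Commute (swap 2 4) (swap (n + 1) (n + 3)) :=
    (Perm.disjoint_swap_swap (by simp; omega)).commute
  rw [map_mul, map_mul, toPermNat_inr_swap_ofNat (by omega) (by omega),
    toPermNat_inr_swap_ofNat (by omega) (by omega), t3, mul_assoc (swap 1 3), commute.eq]
  rfl

lemma t4_eq_toPermNat (hn : 2 ≤ n) :
    t4 n = toPermNat n (inr (swap (Fin.ofNat n 0) (Fin.ofNat n 1)) *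
      inl (Hyperoctahedral.signChanges (fun i => Fin.ofNat n (i + 2)) (n - 2))) := by
  rw [map_mul, toPermNat_inr_swap_ofNat (by omega) (by omega),
    toPermNat_inl_signChanges (by omega), t4]
  ring_nf

lemma β_zero_eq_toPermNat : β n 0 = toPermNat n (inl (Pi.mulSingle (Fin.ofNat n 0) (-1))) :=
  (toPermNat_inl_mulSingle_ofNat (Nat.pos_of_neZero n)).symm

lemma β_succ_eq_toPermNat {i : ℕ} (hi : i + 1 < n) :
    β n (i + 1) = toPermNat n (inr (swap (Fin.ofNat n i) (Fin.ofNat n (i + 1)))) :=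
  (toPermNat_inr_swap_ofNat (by omega) hi).symm

variable (n) in
lemma Bgrp_eq_range : Bgrp n = (toPermNat n).range := by
  refine le_antisymm ((Subgroup.closure_le _).mpr ?_) ?_
  · rintro _ ⟨_ | i, hi, rfl⟩
    · exact ⟨_, β_zero_eq_toPermNat.symm⟩
    · exact ⟨_, (β_succ_eq_toPermNat hi).symm⟩
  have mem {i : ℕ} (hi : i < n) : β n i ∈ Bgrp n := Subgroup.subset_closure ⟨i, hi, rfl⟩
  have swap_zero_mem {i : ℕ} (hi : i < n) :
      swap (Fin.ofNat n 0) (Fin.ofNat n i) ∈ ((Bgrp n).comap (toPermNat n)).comap inr := by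
    induction i with
    | zero => exact swap_self (Fin.ofNat n 0) ▸ one_mem _
    | succ i ih =>
      refine SubmonoidClass.swap_mem_trans _ (ih (by omega)) ?_
      rw [Subgroup.mem_comap, Subgroup.mem_comap, ← β_succ_eq_toPermNat hi]
      exact mem hi
  have comap_inr : ((Bgrp n).comap (toPermNat n)).comap inr = ⊤ :=
    eq_top_of_forall_swap_mem (Fin.ofNat n 0) fun j => by
      simpa using swap_zero_mem j.isLt
  have comap_toPermNat : (Bgrp n).comap (toPermNat n) = ⊤ :=
    Hyperoctahedral.eq_top_of_inl_mulSingle_mem ((Subgroup.eq_top_iff' _).mp comap_inr)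
      (show toPermNat n _ ∈ Bgrp n from β_zero_eq_toPermNat (n := n) ▸ mem (Nat.pos_of_neZero n))
  exact range_le_of_comap_eq_top comap_toPermNat

lemma closure_t1_t2_t3_t4_eq_range {k : ℕ} (hk : 0 < k) :
    Subgroup.closure {t1 (2 * k + 3), t2 (2 * k + 3), t3 (2 * k + 3), t4 (2 * k + 3)} =
      (toPermNat (2 * k + 3)).range := by
  have half₁ : (2 * k + 3 - 2) / 2 + 1 = k + 1 := by omega
  have half₂ : (2 * k + 3 - 3) / 2 = k := by omega
  have injOn : Set.InjOn (Fin.ofNat (2 * k + 3)) (Set.Iic (2 * k + 2)) :=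
    injOn_ofNat.mono fun i (hi : i ≤ 2 * k + 2) => Nat.lt_succ_of_le hi
  have h₁ := t1_eq_toPermNat (n := 2 * k + 3) (by omega)
  have h₂ := t2_eq_toPermNat (n := 2 * k + 3) (by omega)
  have h₃ := t3_eq_toPermNat (n := 2 * k + 3) (by omega)
  have h₄ := t4_eq_toPermNat (n := 2 * k + 3) (by omega)
  rw [half₁] at h₁
  rw [half₂] at h₂
  rw [h₁, h₂, h₃, h₄]
  refine le_antisymm ((Subgroup.closure_le _).mpr ?_) (range_le_of_comap_eq_top ?_)
  · rintro _ (rfl | rfl | rfl | rfl) <;> exact ⟨_, rfl⟩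
  · apply Hyperoctahedral.eq_top_of_pairSwaps_signChanges_mem injOn
      (fun j => ⟨j, by omega, by simp⟩) hk <;>
      exact Subgroup.subset_closure (by simp)

end Generators

/-- For odd `n ≥ 5`, `G = ⟨t₁,t₂,t₃,t₄⟩` is isomorphic to the Coxeter group of
type `Bₙ` (realized as `⟨β₀,…,β_{n-1}⟩ ≤ Sym(2n)`), i.e. to the hyperoctahedral
group of order `2ⁿ·n!`. -/
theorem G_iso_Bn (n : ℕ) (hn : 5 ≤ n) (hodd : Odd n) :
    Nonempty ((Subgroup.closure {t1 n, t2 n, t3 n, t4 n} : Subgroup (Equiv.Perm ℕ)) ≃*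
      Bgrp n) ∧
    Nat.card (Subgroup.closure {t1 n, t2 n, t3 n, t4 n} : Subgroup (Equiv.Perm ℕ)) =
      2 ^ n * Nat.factorial n := by
  obtain ⟨k, rfl⟩ : ∃ k, n = 2 * k + 3 := by
    obtain ⟨m, rfl⟩ := hodd
    exact ⟨m - 1, by omega⟩
  rw [closure_t1_t2_t3_t4_eq_range (by omega), Bgrp_eq_range]
  exact ⟨⟨MulEquiv.refl _⟩, card_range_toPermNat _⟩
end

section
/- Let n ≥ 8 and m = n−4. In Sym(2n), define t₁ = (2,3)(n+2,n+3)(4,5)(n+4,n+5)∏_{i=6}^{n}(i,n+i), t₂ = (1,2)(n+1,n+2)(3,4)(n+3,n+4)(5,6)(n+5,n+6)∏_{i=7}^{n}(i,n+i), t₃ = (2,3)(n+2,n+3)(6,7)(n+6,n+7), and t_k = (k+3,k+4)(n+k+3,n+k+4) for 4 ≤ k ≤ m. Then t₁t₂ has order 12, t₂t₃ has order 12, t₃t₄ has order 6, tᵢtⱼ has order 3 when 4 ≤ i < j ≤ m with j = i+1, and tᵢtⱼ has order 2 whenever |i−j| ≥ 2. -/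
open Equiv

/-- The generators `t₁, …, t_m` (`m = n − 4`) of the second family, as
permutations of `ℕ` (elements of `Sym(2n)` on `{1,…,2n}`):
`t₁ = (2,3)(n+2,n+3)(4,5)(n+4,n+5)∏_{i=6}^{n}(i,n+i)`,
`t₂ = (1,2)(n+1,n+2)(3,4)(n+3,n+4)(5,6)(n+5,n+6)∏_{i=7}^{n}(i,n+i)`,
`t₃ = (2,3)(n+2,n+3)(6,7)(n+6,n+7)`, and
`t_k = (k+3,k+4)(n+k+3,n+k+4)` for `k ≥ 4`. -/
def t (n k : ℕ) : Equiv.Perm ℕ :=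
  if k = 1 then
    Equiv.swap 2 3 * Equiv.swap (n+2) (n+3) * Equiv.swap 4 5 * Equiv.swap (n+4) (n+5) *
      ((List.range (n - 5)).map (fun j => Equiv.swap (6 + j) (n+6+j))).prod
  else if k = 2 then
    Equiv.swap 1 2 * Equiv.swap (n+1) (n+2) * Equiv.swap 3 4 * Equiv.swap (n+3) (n+4) *
      Equiv.swap 5 6 * Equiv.swap (n+5) (n+6) *
      ((List.range (n - 6)).map (fun j => Equiv.swap (7 + j) (n+7+j))).prod
  else if k = 3 then
    Equiv.swap 2 3 * Equiv.swap (n+2) (n+3) * Equiv.swap 6 7 * Equiv.swap (n+6) (n+7)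
  else
    Equiv.swap (k+3) (k+4) * Equiv.swap (n+k+3) (n+k+4)

/-- The product `t₁t₂⋯t_k` of the first `k` generators in increasing order. -/
def tProd (n k : ℕ) : Equiv.Perm ℕ :=
  ((List.range k).map (fun i => t n (i+1))).prod

/-- `∏_{i=1}^{k}(i, n+i)`. -/
def bigSwap (n k : ℕ) : Equiv.Perm ℕ :=
  ((List.range k).map (fun i => Equiv.swap (i+1) (n+(i+1)))).prod

/-!
Reading `n + i` as the letter `-i`, the generators are signed permutations: products of doubled
transpositions `(a, b)(n + a, n + b)` and of sign changes `(i, n + i)`. Doubled cycles that share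
one letter multiply by joining, as ordinary cycles do. A doubled `r`-cycle has order `r`, and
multiplying it by the sign change of one of its letters splices its two halves into a single
`2r`-cycle.

In `t₁t₂` the sign changes cancel except for one letter and the doubled transpositions multiply to
a doubled `6`-cycle, so the product is a `12`-cycle. In `t₂t₃` one obtains disjoint factors of
orders `4`, `6` and at most `2`: a doubled `4`-cycle, a doubled `3`-cycle with one sign change, and
the remaining sign changes. From `t₃t₄` on only doubled transpositions and doubled `3`-cycles occur.
Distant generators are commuting involutions, and they are distinct because `t_j` moves `j + 4`
to `j + 3` whereas `t_i` with `i ≤ j - 2` fixes it or changes its sign.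
-/

theorem formPerm_map_apply {α β : Type*} [DecidableEq α] [DecidableEq β] {f : α → β}
    (hf : Function.Injective f) (x : α) :
    ∀ l : List α, (l.map f).formPerm (f x) = f (l.formPerm x)
  | [] | [_] => rfl
  | a :: b :: l => by
    simpa only [List.map_cons, List.formPerm_cons_cons, Perm.mul_apply, hf.swap_apply] using
      congrArg (swap (f a) (f b)) (formPerm_map_apply hf x (b :: l))

section FormPerm

variable {α : Type*} [DecidableEq α]

theorem mul_formPerm (f : Perm α) (l : List α) : f * l.formPerm = (l.map f).formPerm * f :=
  Equiv.ext fun x => (formPerm_map_apply f.injective x l).symm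

theorem formPerm_append_cons (a : α) (l' : List α) :
    ∀ l : List α, (l ++ a :: l').formPerm = (l ++ [a]).formPerm * (a :: l').formPerm
  | [] => by simp
  | [_] => by simp
  | x :: y :: l => by
    simpa only [List.cons_append, List.formPerm_cons_cons, mul_assoc] using
      congrArg (swap x y * ·) (formPerm_append_cons a l' (y :: l))

theorem formPerm_mul_formPerm_mul_swap {x : α} {l l' : List α} (hx : x ∉ l') (hne : l' ≠ []) :
    (l ++ [x]).formPerm * l'.formPerm * swap x (l'.getLast hne) = (l ++ x :: l').formPerm := by
  obtain ⟨y, m, rfl⟩ := List.exists_cons_of_ne_nil hne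
  rw [mul_assoc, mul_swap_eq_swap_mul, List.formPerm_apply_of_notMem hx,
    List.formPerm_apply_getLast, formPerm_append_cons x (y :: m), List.formPerm_cons_cons]

theorem orderOf_formPerm {l : List α} (hl : l.Nodup) (hne : l ≠ []) :
    orderOf l.formPerm = l.length := by
  refine Nat.dvd_antisymm
    (orderOf_dvd_of_pow_eq_one (List.formPerm_pow_length_eq_one_of_nodup l hl)) ?_
  have hpos : 0 < l.length := List.length_pos_of_ne_nil hne
  have hfix := List.formPerm_pow_apply_getElem l hl (orderOf l.formPerm) 0 hpos
  rw [pow_orderOf_eq_one, Perm.one_apply, hl.getElem_inj_iff, Nat.zero_add] at hfix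
  exact Nat.dvd_of_mod_eq_zero hfix.symm

theorem disjoint_formPerm_of_forall_fixed {f : Perm α} {l : List α} (h : ∀ x ∈ l, f x = x) :
    f.Disjoint l.formPerm := fun x =>
  (em (x ∈ l)).imp (h x) List.formPerm_apply_of_notMem

theorem formPerm_disjoint_formPerm {l l' : List α} (h : l.Disjoint l') :
    l.formPerm.Disjoint l'.formPerm :=
  disjoint_formPerm_of_forall_fixed fun _ hx => List.formPerm_apply_of_notMem fun hx' => h hx' hx

end FormPerm

theorem mul_sq_eq_one_of_commute {M : Type*} [Monoid M] {a b : M} (h : Commute a b)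
    (ha : a ^ 2 = 1) (hb : b ^ 2 = 1) : (a * b) ^ 2 = 1 := by
  rw [h.mul_pow, ha, hb, one_mul]

theorem orderOf_mul_eq_two {G : Type*} [Group G] {a b : G} (h : Commute a b)
    (ha : a ^ 2 = 1) (hb : b ^ 2 = 1) (hne : a ≠ b) : orderOf (a * b) = 2 :=
  orderOf_eq_prime (mul_sq_eq_one_of_commute h ha hb) fun hab =>
    hne <| (eq_inv_of_mul_eq_one_left hab).trans (inv_eq_of_mul_eq_one_left (by rwa [← sq]))

/-- The cycle `l` of `{1, …, n}` together with its translate by `n`: the cycle `l` acting on the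
signed letters `±i`, where `-i` is encoded as `n + i`. -/
def doubledCycle (n : ℕ) (l : List ℕ) : Perm ℕ :=
  l.formPerm * (l.map (n + ·)).formPerm

/-- The sign change `∏_{i=a}^{n} (i, n+i)` of the letters `a, …, n`. -/
def signChange (n a : ℕ) : Perm ℕ :=
  ((List.range (n + 1 - a)).map fun j => swap (a + j) (n + a + j)).prod

section DoubledCycle

variable {n : ℕ} {l l' : List ℕ}

theorem disjoint_map_add (hl : ∀ x ∈ l, x ∈ Set.Icc 1 n) (hl' : ∀ x ∈ l', x ∈ Set.Icc 1 n) :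
    l.Disjoint (l'.map (n + ·)) := by
  simp only [List.Disjoint, List.mem_map]
  rintro x hx ⟨y, hy, rfl⟩
  have := (hl _ hx).2
  have := (hl' y hy).1
  omega

theorem commute_formPerm_map_add (hl : ∀ x ∈ l, x ∈ Set.Icc 1 n)
    (hl' : ∀ x ∈ l', x ∈ Set.Icc 1 n) :
    Commute l.formPerm (l'.map (n + ·)).formPerm :=
  (formPerm_disjoint_formPerm (disjoint_map_add hl hl')).commute

theorem doubledCycle_mul_doubledCycle (l : List ℕ) (a : ℕ) (l' : List ℕ)
    (h : ∀ x ∈ l ++ a :: l', x ∈ Set.Icc 1 n) :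
    doubledCycle n (l ++ [a]) * doubledCycle n (a :: l') = doubledCycle n (l ++ a :: l') := by
  have hcomm : Commute ((l ++ [a]).map (n + ·)).formPerm (a :: l').formPerm :=
    (commute_formPerm_map_add (fun x hx => h x (by grind)) fun x hx => h x (by grind)).symm
  rw [doubledCycle, doubledCycle, doubledCycle, hcomm.mul_mul_mul_comm, ← formPerm_append_cons]
  simp only [List.map_append, List.map_cons, List.map_nil]
  rw [← formPerm_append_cons]

theorem doubledCycle_eq_of_isRotated (hl : l.Nodup) (h : l ~r l') :
    doubledCycle n l = doubledCycle n l' :=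
  congrArg₂ (· * ·) (List.formPerm_eq_of_isRotated hl h)
    (List.formPerm_eq_of_isRotated (hl.map (add_right_injective n)) (h.map _))

theorem doubledCycle_pair_mul_pair {a b c : ℕ} (h : ∀ x ∈ [a, b, c], x ∈ Set.Icc 1 n)
    (hnd : [a, b, c].Nodup) :
    doubledCycle n [a, b] * doubledCycle n [c, a] = doubledCycle n [a, c, b] := by
  have hba : doubledCycle n [a, b] = doubledCycle n [b, a] :=
    doubledCycle_eq_of_isRotated (by grind) ⟨1, rfl⟩
  have hac : doubledCycle n [c, a] = doubledCycle n [a, c] :=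
    doubledCycle_eq_of_isRotated (by grind) ⟨1, rfl⟩
  calc doubledCycle n [a, b] * doubledCycle n [c, a]
      = doubledCycle n [b, a, c] := by
        rw [hba, hac]
        exact doubledCycle_mul_doubledCycle [b] a [c] (by grind)
    _ = doubledCycle n [a, c, b] := doubledCycle_eq_of_isRotated (by grind) ⟨1, rfl⟩

theorem disjoint_doubledCycle (hl : ∀ x ∈ l, x ∈ Set.Icc 1 n) (hl' : ∀ x ∈ l', x ∈ Set.Icc 1 n)
    (h : l.Disjoint l') : (doubledCycle n l).Disjoint (doubledCycle n l') :=
  .mul_left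
    (.mul_right (formPerm_disjoint_formPerm h)
      (formPerm_disjoint_formPerm (disjoint_map_add hl hl')))
    (.mul_right (formPerm_disjoint_formPerm (disjoint_map_add hl' hl).symm)
      (formPerm_disjoint_formPerm (h.map (add_right_injective n))))

theorem orderOf_doubledCycle (hl : ∀ x ∈ l, x ∈ Set.Icc 1 n) (hnd : l.Nodup) (hne : l ≠ []) :
    orderOf (doubledCycle n l) = l.length := by
  rw [doubledCycle, (formPerm_disjoint_formPerm (disjoint_map_add hl hl)).orderOf,
    orderOf_formPerm hnd hne, orderOf_formPerm (hnd.map (add_right_injective n)) (by simpa),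
    List.length_map, Nat.lcm_self]

theorem doubledCycle_apply (hl : ∀ x ∈ l, 1 ≤ x) {x : ℕ} (hx : x ≤ n) :
    doubledCycle n l x = l.formPerm x := by
  rw [doubledCycle, Perm.mul_apply, List.formPerm_apply_of_notMem (l := l.map _)]
  simp only [List.mem_map, not_exists, not_and]
  intro y hy
  have := hl y hy
  omega

theorem doubledCycle_apply_add (hl : ∀ x ∈ l, x ∈ Set.Icc 1 n) {x : ℕ} (hx : 1 ≤ x) :
    doubledCycle n l (n + x) = n + l.formPerm x := by
  rw [doubledCycle, Perm.mul_apply, formPerm_map_apply (add_right_injective n),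
    List.formPerm_apply_of_notMem]
  intro hmem
  by_cases hxl : x ∈ l
  · have := (hl _ hmem).2
    have := (hl _ (List.formPerm_apply_mem_of_mem hxl)).1
    omega
  · have := (hl _ hmem).2
    rw [List.formPerm_apply_of_notMem hxl] at this
    omega

theorem doubledCycle_apply_of_notMem (hl : ∀ x ∈ l, 1 ≤ x) {x : ℕ} (hx : x ≤ n) (hxl : x ∉ l) :
    doubledCycle n l x = x := by
  rw [doubledCycle_apply hl hx, List.formPerm_apply_of_notMem hxl]

theorem doubledCycle_apply_add_of_notMem (hl : ∀ x ∈ l, x ∈ Set.Icc 1 n) {x : ℕ} (hx : 1 ≤ x)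
    (hxl : x ∉ l) : doubledCycle n l (n + x) = n + x := by
  rw [doubledCycle_apply_add hl hx, List.formPerm_apply_of_notMem hxl]

theorem disjoint_doubledCycle_swap (hl : ∀ x ∈ l, x ∈ Set.Icc 1 n) {x : ℕ} (hx : x ∈ Set.Icc 1 n)
    (hxl : x ∉ l) : (doubledCycle n l).Disjoint (swap x (n + x)) :=
  disjoint_formPerm_of_forall_fixed (l := [x, n + x]) <| List.forall_mem_cons.2
    ⟨doubledCycle_apply_of_notMem (fun y hy => (hl y hy).1) hx.2 hxl,
      List.forall_mem_singleton.2 (doubledCycle_apply_add_of_notMem hl hx.1 hxl)⟩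

theorem semiconjBy_doubledCycle_swap (hl : ∀ x ∈ l, x ∈ Set.Icc 1 n) {x y : ℕ}
    (hx : x ∈ Set.Icc 1 n) (hxy : l.formPerm x = y) :
    SemiconjBy (doubledCycle n l) (swap x (n + x)) (swap y (n + y)) := by
  rw [SemiconjBy, mul_swap_eq_swap_mul, doubledCycle_apply (fun y hy => (hl y hy).1) hx.2,
    doubledCycle_apply_add hl hx.1, hxy]

theorem orderOf_doubledCycle_mul_swap (hl : ∀ x ∈ l, x ∈ Set.Icc 1 n) (hnd : l.Nodup) {x : ℕ}
    (hx : x ∈ l) : orderOf (doubledCycle n l * swap x (n + x)) = 2 * l.length := by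
  obtain ⟨s, r, rfl⟩ := List.append_of_mem hx
  have hrot : s ++ x :: r ~r (r ++ s) ++ [x] := by
    simpa using (List.isRotated_append (l := s ++ [x]) (l' := r))
  set m := r ++ s
  have hm : ∀ y ∈ m ++ [x], y ∈ Set.Icc 1 n := fun y hy => hl y (hrot.mem_iff.2 hy)
  have hdisj := disjoint_map_add hm hm
  have hndm : (m ++ [x]).Nodup := hrot.nodup_iff.1 hnd
  have hmerge : doubledCycle n (m ++ [x]) * swap x (n + x) =
      (m ++ x :: (m ++ [x]).map (n + ·)).formPerm := by
    rw [← formPerm_mul_formPerm_mul_swap (hdisj (by simp)) (by simp)]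
    simp [doubledCycle]
  rw [doubledCycle_eq_of_isRotated hnd hrot, hmerge, orderOf_formPerm _ (by simp),
    hrot.perm.length_eq]
  · simp only [List.length_append, List.length_cons, List.length_map, List.length_nil]
    omega
  · rw [List.append_cons]
    exact hndm.append (hndm.map (add_right_injective n)) hdisj

theorem doubledCycle_pair_sq {a b : ℕ} (h : ∀ x ∈ [a, b], x ∈ Set.Icc 1 n) (hab : a ≠ b) :
    doubledCycle n [a, b] ^ 2 = 1 :=
  orderOf_dvd_iff_pow_eq_one.1 (orderOf_doubledCycle h (by simpa) (by simp)).dvd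

end DoubledCycle

section SignChange

theorem prod_range_swap_apply {n k : ℕ} (a : ℕ) (hk : k ≤ n) (x : ℕ) :
    ((List.range k).map fun j => swap (a + j) (n + a + j)).prod x =
      if a ≤ x ∧ x < a + k then n + x
      else if n + a ≤ x ∧ x < n + a + k then x - n else x := by
  induction k generalizing x with
  | zero => rw [if_neg (by omega), if_neg (by omega)]; rfl
  | succ k ih =>
    rw [List.range_succ, List.map_append, List.prod_append, Perm.mul_apply, List.map_singleton,
      List.prod_singleton, ih (by omega), swap_apply_def]
    split_ifs <;> omega

variable {n a : ℕ}

theorem signChange_apply (ha : 1 ≤ a) (x : ℕ) :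
    signChange n a x =
      if a ≤ x ∧ x ≤ n then n + x else if n + a ≤ x ∧ x ≤ 2 * n then x - n else x := by
  rw [signChange, prod_range_swap_apply a (by omega)]
  split_ifs <;> omega

theorem signChange_eq_swap_mul (h : a ≤ n) :
    signChange n a = swap a (n + a) * signChange n (a + 1) := by
  have hlen : n + 1 - a = n + 1 - (a + 1) + 1 := by omega
  simp [signChange, hlen, List.range_succ_eq_map, Function.comp_def, add_assoc, add_comm 1]

theorem signChange_sq (ha : 1 ≤ a) : signChange n a ^ 2 = 1 := by
  ext x
  rw [sq, Perm.mul_apply, signChange_apply ha, signChange_apply ha, Perm.one_apply]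
  split_ifs <;> omega

variable {l : List ℕ}

theorem commute_signChange_doubledCycle (ha : 1 ≤ a) (hl : ∀ x ∈ l, x ∈ Set.Icc a n) :
    Commute (signChange n a) (doubledCycle n l) := by
  have hl' : ∀ x ∈ l, x ∈ Set.Icc 1 n := fun x hx => ⟨ha.trans (hl x hx).1, (hl x hx).2⟩
  have hneg : l.map (signChange n a) = l.map (n + ·) := List.map_congr_left fun x hx => by
    obtain ⟨hax, hxn⟩ := hl x hx
    rw [signChange_apply ha, if_pos ⟨hax, hxn⟩]
  have hpos : (l.map (n + ·)).map (signChange n a) = l := by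
    rw [List.map_map]
    refine (List.map_congr_left fun x hx => ?_).trans (List.map_id l)
    obtain ⟨hax, hxn⟩ := hl x hx
    rw [Function.comp_apply, signChange_apply ha, if_neg (by omega), if_pos (by omega),
      Nat.add_sub_cancel_left, id]
  rw [Commute, SemiconjBy, doubledCycle, ← mul_assoc, mul_formPerm _ l, hneg, mul_assoc,
    mul_formPerm, hpos, ← mul_assoc, (commute_formPerm_map_add hl' hl').eq]

theorem signChange_apply_of_lt {x : ℕ} (hx : x < a) : signChange n a x = x := by
  rw [signChange_apply (by omega), if_neg (by omega), if_neg (by omega)]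

theorem signChange_apply_add_of_lt {x : ℕ} (hx : x ∈ Set.Ico 1 a) :
    signChange n a (n + x) = n + x := by
  obtain ⟨h1x, hxa⟩ := hx
  rw [signChange_apply (by omega), if_neg (by omega), if_neg (by omega)]

theorem disjoint_signChange_doubledCycle (hl : ∀ x ∈ l, x ∈ Set.Ico 1 a) :
    (signChange n a).Disjoint (doubledCycle n l) :=
  .mul_right (disjoint_formPerm_of_forall_fixed fun x hx => signChange_apply_of_lt (hl x hx).2)
    (disjoint_formPerm_of_forall_fixed <|
      List.forall_mem_map.2 fun x hx => signChange_apply_add_of_lt (hl x hx))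

theorem disjoint_signChange_swap {x : ℕ} (hx : x ∈ Set.Ico 1 a) :
    (signChange n a).Disjoint (swap x (n + x)) :=
  disjoint_formPerm_of_forall_fixed (l := [x, n + x]) <| List.forall_mem_cons.2
    ⟨signChange_apply_of_lt hx.2, List.forall_mem_singleton.2 (signChange_apply_add_of_lt hx)⟩

end SignChange

section Generators

variable {n : ℕ}

theorem t_one : t n 1 = doubledCycle n [2, 3] * doubledCycle n [4, 5] * signChange n 6 := by
  simp [t, doubledCycle, signChange, mul_assoc]

theorem t_two :
    t n 2 = doubledCycle n [1, 2] * doubledCycle n [3, 4] * doubledCycle n [5, 6] *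
      signChange n 7 := by
  simp [t, doubledCycle, signChange, mul_assoc]

theorem t_three : t n 3 = doubledCycle n [2, 3] * doubledCycle n [6, 7] := by
  simp [t, doubledCycle, mul_assoc]

theorem t_of_four_le {k : ℕ} (hk : 4 ≤ k) : t n k = doubledCycle n [k + 3, k + 4] := by
  simp [t, doubledCycle, show k ≠ 1 by omega, show k ≠ 2 by omega, show k ≠ 3 by omega, add_assoc]

theorem t_one_sq (hn : 5 ≤ n) : t n 1 ^ 2 = 1 := by
  have h₂₃ : (doubledCycle n [2, 3]).Disjoint (doubledCycle n [4, 5]) :=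
    disjoint_doubledCycle (by grind) (by grind) (by simp)
  have hsign : (doubledCycle n [2, 3] * doubledCycle n [4, 5]).Disjoint (signChange n 6) :=
    .mul_left (disjoint_signChange_doubledCycle (by grind)).symm
      (disjoint_signChange_doubledCycle (by grind)).symm
  rw [t_one]
  exact mul_sq_eq_one_of_commute hsign.commute
    (mul_sq_eq_one_of_commute h₂₃.commute (doubledCycle_pair_sq (by grind) (by simp))
      (doubledCycle_pair_sq (by grind) (by simp))) (signChange_sq (by simp))

theorem disjoint_signChange_seven :
    (signChange n 7).Disjoint
      (doubledCycle n [1, 2] * doubledCycle n [3, 4] * doubledCycle n [5, 6]) :=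
  .mul_right
    (.mul_right (disjoint_signChange_doubledCycle (by grind))
      (disjoint_signChange_doubledCycle (by grind)))
    (disjoint_signChange_doubledCycle (by grind))

theorem t_two_sq (hn : 6 ≤ n) : t n 2 ^ 2 = 1 := by
  have h₁₂ : (doubledCycle n [1, 2]).Disjoint (doubledCycle n [3, 4]) :=
    disjoint_doubledCycle (by grind) (by grind) (by simp)
  have h₅₆ : (doubledCycle n [1, 2] * doubledCycle n [3, 4]).Disjoint (doubledCycle n [5, 6]) :=
    .mul_left (disjoint_doubledCycle (by grind) (by grind) (by simp))
      (disjoint_doubledCycle (by grind) (by grind) (by simp))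
  rw [t_two]
  exact mul_sq_eq_one_of_commute disjoint_signChange_seven.symm.commute
    (mul_sq_eq_one_of_commute h₅₆.commute
      (mul_sq_eq_one_of_commute h₁₂.commute (doubledCycle_pair_sq (by grind) (by simp))
        (doubledCycle_pair_sq (by grind) (by simp)))
      (doubledCycle_pair_sq (by grind) (by simp))) (signChange_sq (by simp))

theorem t_three_sq (hn : 7 ≤ n) : t n 3 ^ 2 = 1 := by
  rw [t_three]
  exact mul_sq_eq_one_of_commute (disjoint_doubledCycle (by grind) (by grind) (by simp)).commute
    (doubledCycle_pair_sq (by grind) (by simp)) (doubledCycle_pair_sq (by grind) (by simp))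

theorem t_sq {k : ℕ} (hk : 1 ≤ k) (hkn : k + 4 ≤ n) : t n k ^ 2 = 1 := by
  obtain rfl | rfl | rfl | hk₄ : k = 1 ∨ k = 2 ∨ k = 3 ∨ 4 ≤ k := by omega
  · exact t_one_sq (by omega)
  · exact t_two_sq (by omega)
  · exact t_three_sq hkn
  · rw [t_of_four_le hk₄]
    exact doubledCycle_pair_sq (by grind) (by simp)

theorem commute_t_one_doubledCycle (hn : 5 ≤ n) {l : List ℕ} (hl : ∀ x ∈ l, x ∈ Set.Icc 6 n) :
    Commute (t n 1) (doubledCycle n l) := by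
  rw [t_one]
  exact .mul_left
    (.mul_left (disjoint_doubledCycle (by grind) (by grind) (by grind [List.Disjoint])).commute
      (disjoint_doubledCycle (by grind) (by grind) (by grind [List.Disjoint])).commute)
    (commute_signChange_doubledCycle (by simp) hl)

theorem commute_t_two_doubledCycle (hn : 6 ≤ n) {l : List ℕ} (hl : ∀ x ∈ l, x ∈ Set.Icc 7 n) :
    Commute (t n 2) (doubledCycle n l) := by
  rw [t_two]
  exact .mul_left
    (.mul_left
      (.mul_left (disjoint_doubledCycle (by grind) (by grind) (by grind [List.Disjoint])).commute
        (disjoint_doubledCycle (by grind) (by grind) (by grind [List.Disjoint])).commute)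
      (disjoint_doubledCycle (by grind) (by grind) (by grind [List.Disjoint])).commute)
    (commute_signChange_doubledCycle (by simp) hl)

theorem commute_t_one_t_three (hn : 7 ≤ n) : Commute (t n 1) (t n 3) := by
  have h₂₃ : Commute (t n 1) (doubledCycle n [2, 3]) := by
    rw [t_one]
    exact .mul_left
      (.mul_left (.refl _) (disjoint_doubledCycle (by grind) (by grind) (by simp)).commute)
      (disjoint_signChange_doubledCycle (by grind)).commute
  rw [t_three]
  exact h₂₃.mul_right (commute_t_one_doubledCycle (by omega) (by grind))

theorem commute_t {i j : ℕ} (hi : 1 ≤ i) (hij : i + 2 ≤ j) (hj : j + 4 ≤ n) :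
    Commute (t n i) (t n j) := by
  obtain rfl | hj₄ : j = 3 ∨ 4 ≤ j := by omega
  · obtain rfl : i = 1 := by omega
    exact commute_t_one_t_three hj
  rw [t_of_four_le hj₄]
  obtain rfl | rfl | rfl | hi₄ : i = 1 ∨ i = 2 ∨ i = 3 ∨ 4 ≤ i := by omega
  · exact commute_t_one_doubledCycle (by omega) (by grind)
  · exact commute_t_two_doubledCycle (by omega) (by grind)
  · rw [t_three]
    exact .mul_left (disjoint_doubledCycle (by grind) (by grind) (by grind [List.Disjoint])).commute
      (disjoint_doubledCycle (by grind) (by grind) (by grind [List.Disjoint])).commute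
  · rw [t_of_four_le hi₄]
    exact (disjoint_doubledCycle (by grind) (by grind) (by grind [List.Disjoint])).commute

theorem t_apply_add_four {j : ℕ} (hj : 3 ≤ j) (hjn : j + 4 ≤ n) : t n j (j + 4) = j + 3 := by
  have hmove : doubledCycle n [j + 3, j + 4] (j + 4) = j + 3 := by
    rw [doubledCycle_apply (by grind) hjn, List.formPerm_pair, swap_apply_right]
  obtain rfl | hj₄ := hj.eq_or_lt
  · rw [t_three, Perm.mul_apply, hmove, doubledCycle_apply_of_notMem] <;> grind
  · rw [t_of_four_le hj₄, hmove]

theorem t_apply_of_add_six_le {i x : ℕ} (hi : 1 ≤ i) (hix : i + 6 ≤ x) (hxn : x ≤ n) :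
    t n i x = if i ≤ 2 then n + x else x := by
  obtain rfl | rfl | rfl | hi₄ : i = 1 ∨ i = 2 ∨ i = 3 ∨ 4 ≤ i := by omega
  · rw [if_pos (by simp), t_one, Perm.mul_apply, Perm.mul_apply, signChange_apply (by simp),
      if_pos (by omega), doubledCycle_apply_add_of_notMem, doubledCycle_apply_add_of_notMem] <;>
    grind
  · rw [if_pos le_rfl, t_two, Perm.mul_apply, Perm.mul_apply, Perm.mul_apply,
      signChange_apply (by simp), if_pos (by omega), doubledCycle_apply_add_of_notMem,
      doubledCycle_apply_add_of_notMem, doubledCycle_apply_add_of_notMem] <;>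
    grind
  · rw [if_neg (by simp), t_three, Perm.mul_apply, doubledCycle_apply_of_notMem (l := [6, 7]),
      doubledCycle_apply_of_notMem] <;>
    grind
  · rw [if_neg (by omega), t_of_four_le hi₄, doubledCycle_apply_of_notMem] <;> grind

theorem t_ne_t {i j : ℕ} (hi : 1 ≤ i) (hij : i + 2 ≤ j) (hj : j + 4 ≤ n) : t n i ≠ t n j := by
  intro h
  have := congrArg (· (j + 4)) h
  simp only [t_apply_add_four (by omega : 3 ≤ j) hj,
    t_apply_of_add_six_le hi (by omega : i + 6 ≤ j + 4) hj] at this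
  split_ifs at this <;> omega

theorem orderOf_t_mul_t {i j : ℕ} (hi : 1 ≤ i) (hij : i + 2 ≤ j) (hj : j + 4 ≤ n) :
    orderOf (t n i * t n j) = 2 :=
  orderOf_mul_eq_two (commute_t hi hij hj) (t_sq hi (by omega))
    (t_sq (by omega) hj) (t_ne_t hi hij hj)

theorem orderOf_t_mul_t_succ {i : ℕ} (hi : 4 ≤ i) (hin : i + 5 ≤ n) :
    orderOf (t n i * t n (i + 1)) = 3 := by
  have hprod : t n i * t n (i + 1) = doubledCycle n [i + 3, i + 4, i + 5] := by
    rw [t_of_four_le hi, t_of_four_le (by omega)]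
    exact doubledCycle_mul_doubledCycle [i + 3] (i + 4) [i + 5] (by grind)
  rw [hprod]
  exact orderOf_doubledCycle (by grind) (by simp) (by simp)

theorem orderOf_t_three_mul_t_four (hn : 8 ≤ n) : orderOf (t n 3 * t n 4) = 6 := by
  have hprod : t n 3 * t n 4 = doubledCycle n [2, 3] * doubledCycle n [6, 7, 8] := by
    rw [t_three, t_of_four_le le_rfl, mul_assoc]
    exact congrArg _ (doubledCycle_mul_doubledCycle [6] 7 [8] (by grind))
  have hdisj : (doubledCycle n [2, 3]).Disjoint (doubledCycle n [6, 7, 8]) :=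
    disjoint_doubledCycle (by grind) (by grind) (by simp)
  rw [hprod, hdisj.orderOf, orderOf_doubledCycle (by grind) (by simp) (by simp),
    orderOf_doubledCycle (by grind) (by simp) (by simp)]
  rfl

theorem doubledCycle_word_one_two (hn : 6 ≤ n) :
    doubledCycle n [2, 3] * doubledCycle n [4, 5] *
        (doubledCycle n [1, 2] * doubledCycle n [3, 4] * doubledCycle n [5, 6]) =
      doubledCycle n [2, 1, 3, 5, 6, 4] := by
  have hcomm : Commute (doubledCycle n [4, 5]) (doubledCycle n [1, 2]) :=
    (disjoint_doubledCycle (by grind) (by grind) (by simp)).commute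
  have h₂₁₃ : doubledCycle n [2, 3] * doubledCycle n [1, 2] = doubledCycle n [2, 1, 3] :=
    doubledCycle_pair_mul_pair (by grind) (by simp)
  have h₄₃₅ : doubledCycle n [4, 5] * doubledCycle n [3, 4] = doubledCycle n [4, 3, 5] :=
    doubledCycle_pair_mul_pair (by grind) (by simp)
  have h₃₅₆₄ : doubledCycle n [4, 3, 5] * doubledCycle n [5, 6] = doubledCycle n [3, 5, 6, 4] :=
    (doubledCycle_mul_doubledCycle [4, 3] 5 [6] (by grind)).trans
      (doubledCycle_eq_of_isRotated (by simp) ⟨1, rfl⟩)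
  calc doubledCycle n [2, 3] * doubledCycle n [4, 5] *
        (doubledCycle n [1, 2] * doubledCycle n [3, 4] * doubledCycle n [5, 6])
      = doubledCycle n [2, 3] * doubledCycle n [1, 2] *
          (doubledCycle n [4, 5] * doubledCycle n [3, 4] * doubledCycle n [5, 6]) := by
        simp only [mul_assoc, hcomm.left_comm]
    _ = doubledCycle n [2, 1, 3] * doubledCycle n [3, 5, 6, 4] := by rw [h₂₁₃, h₄₃₅, h₃₅₆₄]
    _ = doubledCycle n [2, 1, 3, 5, 6, 4] :=
        doubledCycle_mul_doubledCycle [2, 1] 3 [5, 6, 4] (by grind)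

theorem t_one_mul_t_two (hn : 6 ≤ n) :
    t n 1 * t n 2 = doubledCycle n [2, 1, 3, 5, 6, 4] * swap 5 (n + 5) := by
  have hswap : SemiconjBy
      (doubledCycle n [1, 2] * doubledCycle n [3, 4] * doubledCycle n [5, 6])
      (swap 5 (n + 5)) (swap 6 (n + 6)) :=
    .mul_left
      (.mul_left (semiconjBy_doubledCycle_swap (x := 6) (by grind) (by grind) rfl)
        (semiconjBy_doubledCycle_swap (x := 6) (by grind) (by grind) rfl))
      (semiconjBy_doubledCycle_swap (x := 5) (by grind) (by grind) rfl)
  rw [← doubledCycle_word_one_two hn, mul_assoc _ _ (swap _ _), hswap.eq, t_one, t_two,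
    ← disjoint_signChange_seven.commute.eq, signChange_eq_swap_mul hn, mul_assoc,
    mul_assoc (swap _ _), ← mul_assoc (signChange n 7), ← sq, signChange_sq (by simp), one_mul]

theorem doubledCycle_word_two_three (hn : 7 ≤ n) :
    doubledCycle n [1, 2] * doubledCycle n [3, 4] * doubledCycle n [5, 6] *
        (doubledCycle n [2, 3] * doubledCycle n [6, 7]) =
      doubledCycle n [1, 2, 4, 3] * doubledCycle n [5, 6, 7] := by
  have hcomm : Commute (doubledCycle n [5, 6]) (doubledCycle n [2, 3]) :=
    (disjoint_doubledCycle (by grind) (by grind) (by simp)).commute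
  have h₂₄₃ : doubledCycle n [3, 4] * doubledCycle n [2, 3] = doubledCycle n [2, 4, 3] :=
    (doubledCycle_pair_mul_pair (by grind) (by simp)).trans
      (doubledCycle_eq_of_isRotated (by simp) ⟨1, rfl⟩)
  have h₁₂₄₃ : doubledCycle n [1, 2] * doubledCycle n [2, 4, 3] = doubledCycle n [1, 2, 4, 3] :=
    doubledCycle_mul_doubledCycle [1] 2 [4, 3] (by grind)
  have h₅₆₇ : doubledCycle n [5, 6] * doubledCycle n [6, 7] = doubledCycle n [5, 6, 7] :=
    doubledCycle_mul_doubledCycle [5] 6 [7] (by grind)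
  rw [← h₁₂₄₃, ← h₂₄₃, ← h₅₆₇]
  simp only [mul_assoc, hcomm.left_comm]

theorem t_two_mul_t_three (hn : 7 ≤ n) :
    t n 2 * t n 3 =
      doubledCycle n [1, 2, 4, 3] * (doubledCycle n [5, 6, 7] * swap 6 (n + 6)) *
        signChange n 8 := by
  have hswap : SemiconjBy (doubledCycle n [2, 3] * doubledCycle n [6, 7])
      (swap 6 (n + 6)) (swap 7 (n + 7)) :=
    .mul_left (semiconjBy_doubledCycle_swap (x := 7) (by grind) (by grind) rfl)
      (semiconjBy_doubledCycle_swap (x := 6) (by grind) (by grind) rfl)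
  have hsign : Commute (signChange n 8) (doubledCycle n [2, 3] * doubledCycle n [6, 7]) :=
    (disjoint_signChange_doubledCycle (by grind)).commute.mul_right
      (disjoint_signChange_doubledCycle (by grind)).commute
  rw [t_two, t_three, signChange_eq_swap_mul hn, mul_assoc _ (_ * _), mul_assoc (swap _ _),
    hsign.eq, ← mul_assoc (swap _ _), ← hswap.eq, ← mul_assoc, ← mul_assoc,
    doubledCycle_word_two_three hn, mul_assoc (doubledCycle n [1, 2, 4, 3])]

theorem orderOf_t_one_mul_t_two (hn : 6 ≤ n) : orderOf (t n 1 * t n 2) = 12 := by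
  rw [t_one_mul_t_two hn, orderOf_doubledCycle_mul_swap (by grind) (by simp) (by simp)]
  rfl

theorem orderOf_t_two_mul_t_three (hn : 7 ≤ n) : orderOf (t n 2 * t n 3) = 12 := by
  have hcycles : (doubledCycle n [1, 2, 4, 3]).Disjoint
      (doubledCycle n [5, 6, 7] * swap 6 (n + 6)) :=
    .mul_right (disjoint_doubledCycle (by grind) (by grind) (by simp))
      (disjoint_doubledCycle_swap (by grind) (by grind) (by simp))
  have hsigns : (signChange n 8).Disjoint
      (doubledCycle n [1, 2, 4, 3] * (doubledCycle n [5, 6, 7] * swap 6 (n + 6))) :=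
    .mul_right (disjoint_signChange_doubledCycle (by grind))
      (.mul_right (disjoint_signChange_doubledCycle (by grind))
        (disjoint_signChange_swap (by grind)))
  have hdvd : orderOf (signChange n 8) ∣ 12 :=
    (orderOf_dvd_of_pow_eq_one (signChange_sq (by simp))).trans (by norm_num)
  rw [t_two_mul_t_three hn, hsigns.symm.orderOf, hcycles.orderOf,
    orderOf_doubledCycle (by grind) (by simp) (by simp),
    orderOf_doubledCycle_mul_swap (by grind) (by simp) (by simp)]
  exact Nat.lcm_eq_left hdvd

end Generators

/-- Orders of products of consecutive/distant generators of the second family: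
`t₁t₂` and `t₂t₃` have order `12`, `t₃t₄` has order `6`, `tᵢt_{i+1}` has
order `3` for `4 ≤ i < i+1 ≤ m`, and `tᵢtⱼ` has order `2` when `|i−j| ≥ 2`. -/
theorem orders_of_products (n : ℕ) (hn : 8 ≤ n) (m : ℕ) (hm : m = n - 4) :
    orderOf (t n 1 * t n 2) = 12 ∧
    orderOf (t n 2 * t n 3) = 12 ∧
    orderOf (t n 3 * t n 4) = 6 ∧
    (∀ i, 4 ≤ i → i + 1 ≤ m → orderOf (t n i * t n (i+1)) = 3) ∧
    (∀ i j, 1 ≤ i → i ≤ m → 1 ≤ j → j ≤ m → 2 ≤ Nat.dist i j →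
      orderOf (t n i * t n j) = 2) := by
  subst hm
  refine ⟨orderOf_t_one_mul_t_two (by omega), orderOf_t_two_mul_t_three (by omega),
    orderOf_t_three_mul_t_four hn, fun i hi him => orderOf_t_mul_t_succ hi (by omega),
    fun i j hi him hj hjm hdist => ?_⟩
  obtain hij | hji : i + 2 ≤ j ∨ j + 2 ≤ i := by
    rw [Nat.dist] at hdist
    omega
  · exact orderOf_t_mul_t hi hij (by omega)
  · rw [← (commute_t hj hji (by omega)).eq]
    exact orderOf_t_mul_t hj hji (by omega)
end

section
/- Let n ≥ 8 and let t₂, t₃, t₄ ∈ Sym(2n) be defined by t₂ = (1,2)(n+1,n+2)(3,4)(n+3,n+4)(5,6)(n+5,n+6)∏_{i=7}^{n}(i,n+i), t₃ = (2,3)(n+2,n+3)(6,7)(n+6,n+7), t₄ = (7,8)(n+7,n+8). Then the subgroup H = ⟨t₂, t₃, t₄⟩ has order 2⁶·3 = 192; moreover ⟨(t₂t₃)³, (t₃t₄)³⟩ is a normal subgroup of H isomorphic to the dihedral group of order 8, and C_H(⟨(t₂t₃)³, (t₃t₄)³⟩) = ⟨(t₂t₃)², t₄⟩ ≅ ℤ₂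 × Sym(4). -/
open Equiv

/-!
The elements `t₂`, `t₃`, `t₄` preserve the squares `{1, …, 4}` and `{n+1, …, n+4}` and permute the
pairs `{i, n+i}` with `i ≥ 5`. Dih₈ acts on each square through the cyclic order `1, 3, 4, 2` of its
vertices, and on the pairs by exchanging the two elements of all of them; Sym(4) permutes the pairs
with `5 ≤ i ≤ 8`, numbered `0, …, 3`. These actions commute and embed Dih₈ × Sym(4) in Sym(2n);
`t₂`, `t₃`, `t₄` are the images of `(sr 1, (0 1))`, `(sr 0, (1 2))`, `(1, (2 3))`. Cubing `t₂t₃` and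
`t₃t₄` kills the 3-cycles in Sym(4) and leaves `r 1` and `sr 0`, which generate the factor Dih₈, so
the centralizer is Z(Dih₈) × Sym(4). As `(t₂t₃)²` is the product of the central element `r 2` with a
3-cycle, its cube is `r 2`; and this 3-cycle generates Sym(4) together with `(2 3)`. So `(t₂t₃)²`
and `t₄` generate the centralizer.
-/

namespace H234

open Subgroup MonoidHom

theorem prod_map_range_add_two {M : Type*} [Monoid M] (m : ℕ) (f : ℕ → M) :
    ((List.range (m + 2)).map f).prod =
      f 0 * (f 1 * ((List.finRange m).map fun i : Fin m => f (2 + i)).prod) := by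
  have hcoe : ((List.finRange m).map fun i : Fin m => f (2 + i)) =
      (List.range m).map fun j => f (2 + j) := by
    rw [← List.map_coe_finRange_eq_range, List.map_map]
    rfl
  rw [hcoe, List.range_succ_eq_map, List.range_succ_eq_map]
  simp [Function.comp_def, add_comm 2]

section Group

variable {G K : Type*} [Group G] [Group K]

theorem normal_range_inl : (inl G K).range.Normal :=
  ⟨by rintro _ ⟨a, rfl⟩ ⟨g, k⟩; exact ⟨g * a * g⁻¹, by simp⟩⟩

theorem centralizer_range_inl :
    centralizer ((inl G K).range : Set (G × K)) = (center G).prod ⊤ := by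
  ext ⟨g, k⟩
  simp [mem_centralizer_iff, mem_prod, mem_center_iff]

theorem eq_prod_top_of_map_snd_eq_top {A : Subgroup G} {H : Subgroup (G × K)}
    (hAH : A.map (inl G K) ≤ H) (hHA : H ≤ A.prod ⊤) (hH : H.map (snd G K) = ⊤) :
    H = A.prod ⊤ := by
  refine le_antisymm hHA ?_
  rintro ⟨a, k⟩ ⟨ha, -⟩
  obtain ⟨⟨b, k⟩, hbk, rfl⟩ : k ∈ H.map (snd G K) := hH ▸ mem_top k
  have hab : (a * b⁻¹, 1) ∈ H := hAH ⟨_, A.mul_mem ha (A.inv_mem (hHA hbk).1), rfl⟩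
  simpa using H.mul_mem hab hbk

theorem conj_mem_map {f : G →* K} {N : Subgroup G} (hN : N.Normal) {h r : K}
    (hh : h ∈ f.range) (hr : r ∈ N.map f) : h * r * h⁻¹ ∈ N.map f := by
  obtain ⟨h, rfl⟩ := hh
  obtain ⟨r, hr, rfl⟩ := hr
  exact ⟨h * r * h⁻¹, hN.conj_mem r hr h, by simp⟩

theorem centralizer_map_inf_range {f : G →* K} (hf : Function.Injective f) (A : Subgroup G) :
    centralizer (A.map f : Set K) ⊓ f.range = (centralizer (A : Set G)).map f := by
  ext x
  constructor
  · rintro ⟨hx, g, rfl⟩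
    refine ⟨g, fun a ha => hf ?_, rfl⟩
    simpa using hx (f a) (mem_map_of_mem f ha)
  · rintro ⟨g, hg, rfl⟩
    refine ⟨?_, g, rfl⟩
    rintro _ ⟨a, ha, rfl⟩
    simp only [← map_mul, hg a ha]

end Group

section Dihedral

theorem closure_r_one_sr_zero (n : ℕ) :
    closure {(.r 1 : DihedralGroup n), .sr 0} = ⊤ := by
  set H := closure {(.r 1 : DihedralGroup n), .sr 0}
  have hr (i : ZMod n) : .r i ∈ H := by
    obtain ⟨k, rfl⟩ := ZMod.intCast_surjective i
    rw [← DihedralGroup.r_one_zpow]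
    exact zpow_mem (mem_closure_of_mem (by simp)) k
  have hs : .sr 0 ∈ H := mem_closure_of_mem (by simp)
  refine eq_top_iff.2 ?_
  rintro (i | i) -
  · exact hr i
  · simpa using mul_mem hs (hr i)

theorem center_dihedralGroup_four : center (DihedralGroup 4) = zpowers (.r 2) := by
  refine le_antisymm (fun d hd => ?_) (zpowers_le.2 (mem_center_iff.2 (by decide)))
  have hd' : d = 1 ∨ d = .r 2 := by
    rw [mem_center_iff] at hd
    revert d
    decide
  rcases hd' with rfl | rfl
  exacts [one_mem _, mem_zpowers _]

theorem nat_card_center_dihedralGroup_four : Nat.card (center (DihedralGroup 4)) = 2 := by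
  rw [center_dihedralGroup_four, Nat.card_zpowers, DihedralGroup.orderOf_r]
  rfl

/-- The action of `DihedralGroup n` on the vertices `ZMod n` of the regular `n`-gon. The signs are
forced by the convention `sr i * sr j = r (j - i)`. -/
def dihedralPerm (n : ℕ) : DihedralGroup n →* Perm (ZMod n) :=
  MonoidHom.mk' (fun
    | .r i => Equiv.addRight i
    | .sr i => Equiv.subLeft (-i)) <| by
  rintro (i | i) (j | j) <;> ext1 x <;>
    simp only [DihedralGroup.r_mul_r, DihedralGroup.r_mul_sr, DihedralGroup.sr_mul_r,
      DihedralGroup.sr_mul_sr, Perm.mul_apply, coe_addRight, subLeft_apply] <;> ring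

theorem dihedralPerm_injective {n : ℕ} (hn : (2 : ZMod n) ≠ 0) :
    Function.Injective (dihedralPerm n) := by
  have hr (i x : ZMod n) : dihedralPerm n (.r i) x = x + i := rfl
  have hs (i x : ZMod n) : dihedralPerm n (.sr i) x = -i - x := rfl
  refine (injective_iff_map_eq_one _).2 ?_
  rintro (i | i) h
  · have hi : i = 0 := by simpa [hr] using DFunLike.congr_fun h 0
    rw [hi, DihedralGroup.r_zero]
  · have h₀ := DFunLike.congr_fun h 0
    have h₁ := DFunLike.congr_fun h 1
    simp only [hs, Perm.one_apply] at h₀ h₁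
    exact absurd (by linear_combination h₀ - h₁) hn

/-- The action of `DihedralGroup 4` on two points with kernel generated by `sr 0` and `r 2`. -/
def dihedralParity : DihedralGroup 4 →* Perm Bool :=
  MonoidHom.mk' (fun
    | .r i | .sr i => if Even i.val then 1 else swap false true) <| by decide

end Dihedral

section Perm

variable {α β γ : Type*}

theorem closure_threeCycle_swap :
    closure {(swap (0 : Fin 4) 1 * swap 1 2) ^ 2, swap 2 3} = ⊤ := by
  set H := closure {(swap (0 : Fin 4) 1 * swap 1 2) ^ 2, swap 2 3}
  set σ : Perm (Fin 4) := (swap 0 1 * swap 1 2) ^ 2 * swap 2 3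
  have hcycle : σ.IsCycle := ⟨2, by decide, by decide⟩
  have hsupp : σ.support = Finset.univ := by decide
  have hswap : swap 2 3 ∈ H := mem_closure_of_mem (by simp)
  have hσ : σ ∈ H := mul_mem (mem_closure_of_mem (by simp)) hswap
  rw [eq_top_iff, ← Perm.closure_cycle_adjacent_swap hcycle hsupp 2, closure_le]
  rintro _ (rfl | rfl)
  exacts [hσ, hswap]

/-- The product action on `α × β`. -/
def prodCongrHom (α β : Type*) : Perm α × Perm β →* Perm (α × β) where
  toFun e := e.1.prodCongr e.2
  map_one' := rfl
  map_mul' _ _ := rfl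

theorem prodCongrHom_apply_apply (e : Perm α × Perm β) (x : α × β) :
    prodCongrHom α β e x = (e.1 x.1, e.2 x.2) := rfl

theorem prodCongrHom_injective [Nonempty α] [Nonempty β] :
    Function.Injective (prodCongrHom α β) := by
  intro e e' h
  have h' (a : α) (b : β) : e.1 a = e'.1 a ∧ e.2 b = e'.2 b :=
    Prod.ext_iff.1 (DFunLike.congr_fun h (a, b))
  inhabit α
  inhabit β
  exact Prod.ext (Equiv.ext fun a => (h' a default).1) (Equiv.ext fun b => (h' default b).2)

theorem prod_map_swap_false_true_apply [DecidableEq α] {l : List α} (hl : l.Nodup)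
    (x : α × Bool) :
    (l.map fun a => swap (a, false) (a, true)).prod x = if x.1 ∈ l then (x.1, !x.2) else x := by
  induction l with
  | nil => simp
  | cons a l ih =>
    obtain ⟨i, b⟩ := x
    obtain ⟨ha, hl⟩ := List.nodup_cons.1 hl
    rw [List.map_cons, List.prod_cons, Perm.mul_apply, ih hl]
    by_cases hi : i = a
    · subst hi
      cases b <;> simp [ha]
    · simp only [List.mem_cons, hi, false_or]
      split_ifs <;> exact swap_apply_of_ne_of_ne (by simp [hi]) (by simp [hi])

theorem prodCongrHom_one_swap [DecidableEq α] {l : List α} (hl : l.Nodup) (hmem : ∀ a, a ∈ l) :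
    prodCongrHom α Bool (1, swap false true) =
      (l.map fun a => swap (a, false) (a, true)).prod := by
  ext1 ⟨a, b⟩
  rw [prod_map_swap_false_true_apply hl]
  cases b <;> simp [prodCongrHom_apply_apply, hmem]

theorem viaEmbeddingHom_swap [DecidableEq α] [DecidableEq β] (ι : α ↪ β) (x y : α) :
    Perm.viaEmbeddingHom ι (swap x y) = swap (ι x) (ι y) := by
  ext z
  rw [Perm.viaEmbeddingHom_apply]
  by_cases hz : z ∈ Set.range ι
  · obtain ⟨a, rfl⟩ := hz
    rw [Perm.viaEmbedding_apply, ι.injective.map_swap]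
  · rw [Perm.viaEmbedding_apply_of_notMem _ _ _ hz, swap_apply_of_ne_of_ne] <;>
      exact fun h => hz (h ▸ ⟨_, rfl⟩)

theorem viaEmbeddingHom_sumCongr (ι : α ⊕ β ↪ γ) (e : Perm α) (f : Perm β) :
    Perm.viaEmbeddingHom ι (Perm.sumCongr e f) =
      Perm.viaEmbeddingHom (.trans .inl ι) e * Perm.viaEmbeddingHom (.trans .inr ι) f := by
  have he (a : α) : e.viaEmbedding (.trans .inl ι) (ι (.inl a)) = ι (.inl (e a)) :=
    Perm.viaEmbedding_apply e (.trans .inl ι) a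
  have hf (b : β) : f.viaEmbedding (.trans .inr ι) (ι (.inr b)) = ι (.inr (f b)) :=
    Perm.viaEmbedding_apply f (.trans .inr ι) b
  ext z
  simp only [Perm.viaEmbeddingHom_apply, Perm.mul_apply]
  by_cases hz : z ∈ Set.range ι
  · obtain ⟨a | b, rfl⟩ := hz
    · rw [Perm.viaEmbedding_apply, Perm.viaEmbedding_apply_of_notMem f _ _ (by simp), he]
      rfl
    · rw [Perm.viaEmbedding_apply, hf, Perm.viaEmbedding_apply_of_notMem e _ _ (by simp)]
      rfl
  · rw [Perm.viaEmbedding_apply_of_notMem _ _ _ hz, Perm.viaEmbedding_apply_of_notMem f,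
      Perm.viaEmbedding_apply_of_notMem e] <;>
      exact fun ⟨_, h⟩ => hz ⟨_, h⟩

end Perm

section Model

/-- The element of `DihedralGroup 4 × Perm (Fin 4)` corresponding to `t₂`. -/
def g₂ : DihedralGroup 4 × Perm (Fin 4) := (.sr 1, swap 0 1)

/-- The element of `DihedralGroup 4 × Perm (Fin 4)` corresponding to `t₃`. -/
def g₃ : DihedralGroup 4 × Perm (Fin 4) := (.sr 0, swap 1 2)

/-- The element of `DihedralGroup 4 × Perm (Fin 4)` corresponding to `t₄`. -/
def g₄ : DihedralGroup 4 × Perm (Fin 4) := (1, swap 2 3)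

theorem closure_cubes_eq_range_inl :
    closure {(g₂ * g₃) ^ 3, (g₃ * g₄) ^ 3} = (inl (DihedralGroup 4) (Perm (Fin 4))).range := by
  have h₂₃ : (g₂ * g₃) ^ 3 = inl _ _ (.r 1) := by decide
  have h₃₄ : (g₃ * g₄) ^ 3 = inl _ _ (.sr 0) := by decide
  rw [h₂₃, h₃₄, ← Set.image_pair, ← map_closure, closure_r_one_sr_zero, range_eq_map]

theorem closure_generators_eq_top : closure {g₂, g₃, g₄} = ⊤ := by
  have h₂ : g₂ ∈ closure {g₂, g₃, g₄} := mem_closure_of_mem (by simp)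
  have h₃ : g₃ ∈ closure {g₂, g₃, g₄} := mem_closure_of_mem (by simp)
  have h₄ : g₄ ∈ closure {g₂, g₃, g₄} := mem_closure_of_mem (by simp)
  rw [← top_prod_top]
  apply eq_prod_top_of_map_snd_eq_top
  · rw [← range_eq_map, ← closure_cubes_eq_range_inl, closure_le, Set.pair_subset_iff]
    exact ⟨pow_mem (mul_mem h₂ h₃) 3, pow_mem (mul_mem h₃ h₄) 3⟩
  · exact top_prod_top.ge.trans' le_top
  · rw [eq_top_iff, ← closure_threeCycle_swap, closure_le, Set.pair_subset_iff]
    exact ⟨⟨_, pow_mem (mul_mem h₂ h₃) 2, rfl⟩, ⟨_, h₄, rfl⟩⟩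

theorem closure_square_eq_center_prod_top :
    closure {(g₂ * g₃) ^ 2, g₄} = (center (DihedralGroup 4)).prod ⊤ := by
  apply eq_prod_top_of_map_snd_eq_top
  · have hr : inl _ _ (.r 2) = ((g₂ * g₃) ^ 2) ^ 3 := by decide
    rw [center_dihedralGroup_four, map_zpowers, zpowers_le, hr]
    exact pow_mem (mem_closure_of_mem (by simp)) 3
  · rw [closure_le, center_dihedralGroup_four, Set.pair_subset_iff]
    exact ⟨⟨mem_zpowers _, mem_top _⟩, ⟨one_mem _, mem_top _⟩⟩
  · rw [map_closure, Set.image_pair]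
    exact closure_threeCycle_swap

theorem nonempty_center_prod_top_mulEquiv :
    Nonempty ((center (DihedralGroup 4)).prod (⊤ : Subgroup (Perm (Fin 4))) ≃*
      Multiplicative (ZMod 2) × Perm (Fin 4)) := by
  have hcard : Nat.card (Multiplicative (ZMod 2)) = 2 := by simp
  exact ⟨(prodEquiv _ _).trans <|
    (mulEquivOfPrimeCardEq nat_card_center_dihedralGroup_four hcard).prodCongr topEquiv⟩

end Model

section Labelling

/-- The points `1, …, 2n` as the disjoint union of the two squares `{1, …, 4}`, `{n+1, …, n+4}`,
the pairs `{i, n+i}` with `5 ≤ i ≤ 8` and the pairs `{i, n+i}` with `9 ≤ i ≤ n`. -/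
abbrev Point (n : ℕ) : Type := (ZMod 4 × Bool) ⊕ (Fin 4 × Bool) ⊕ (Fin (n - 8) × Bool)

/-- The vertices `1, 3, 4, 2` of a square, in cyclic order. -/
def squareVertex : ZMod 4 → ℕ := ![1, 3, 4, 2]

/-- The numbering of `Point n` by `1, …, 2n`. The pair `{5, n+5}` is listed in the order opposite to
the others, so that `(5,6)(n+5,n+6)` exchanges the two elements of each pair. -/
def label (n : ℕ) : Point n → ℕ
  | .inl (i, b) => (bif b then n else 0) + squareVertex i
  | .inr (.inl (i, b)) => (bif b ^^ decide (i = 0) then n else 0) + (5 + i)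
  | .inr (.inr (i, b)) => (bif b then n else 0) + (9 + i)

theorem label_injective {n : ℕ} (hn : 8 ≤ n) : Function.Injective (label n) := by
  have hv : ∀ i : ZMod 4, 1 ≤ squareVertex i ∧ squareVertex i ≤ 4 := by decide
  have hinj : ∀ i j : ZMod 4, squareVertex i = squareVertex j → i = j := by decide
  rintro (⟨i, _ | _⟩ | ⟨i, _ | _⟩ | ⟨i, _ | _⟩) (⟨j, _ | _⟩ | ⟨j, _ | _⟩ | ⟨j, _ | _⟩) h
  all_goals
    simp only [label] at h
    grind

end Labelling

section Embedding

/-- The action of `DihedralGroup 4 × Perm (Fin 4)` on `Point n`: the first factor permutes the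
vertices of the two squares and exchanges the two elements of all pairs, the second factor
permutes the pairs `{i, n+i}` with `5 ≤ i ≤ 8`. -/
def pointHom (n : ℕ) : DihedralGroup 4 × Perm (Fin 4) →* Perm (Point n) :=
  (Perm.sumCongrHom _ _).comp <|
    ((prodCongrHom _ _).comp (((dihedralPerm 4).comp (fst _ _)).prod 1)).prod <|
      (Perm.sumCongrHom _ _).comp <|
        ((prodCongrHom _ _).comp ((snd _ _).prod (dihedralParity.comp (fst _ _)))).prod <|
          (prodCongrHom _ _).comp (MonoidHom.prod 1 (dihedralParity.comp (fst _ _)))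

theorem pointHom_injective (n : ℕ) : Function.Injective (pointHom n) := by
  intro m m' h
  have h₁ := Perm.sumCongrHom_injective h
  have h₂ := Perm.sumCongrHom_injective (congrArg Prod.snd h₁)
  have hfst := prodCongrHom_injective (congrArg Prod.fst h₁)
  have hsnd := prodCongrHom_injective (congrArg Prod.fst h₂)
  exact Prod.ext (dihedralPerm_injective (by decide) (congrArg Prod.fst hfst))
    (congrArg Prod.fst hsnd)

variable {n : ℕ} (hn : 8 ≤ n)

/-- The embedding of `DihedralGroup 4 × Perm (Fin 4)` in `Sym(2n)` with image `⟨t₂, t₃, t₄⟩`. -/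
noncomputable def modelHom : DihedralGroup 4 × Perm (Fin 4) →* Perm ℕ :=
  (Perm.viaEmbeddingHom ⟨label n, label_injective hn⟩).comp (pointHom n)

theorem modelHom_injective : Function.Injective (modelHom hn) :=
  (Perm.viaEmbeddingHom_injective _).comp (pointHom_injective n)

theorem modelHom_apply (d : DihedralGroup 4) (s : Perm (Fin 4)) :
    modelHom hn (d, s) =
      Perm.viaEmbeddingHom (.trans .inl ⟨label n, label_injective hn⟩)
          (prodCongrHom _ _ (dihedralPerm 4 d, 1)) *
        (Perm.viaEmbeddingHom (.trans .inl (.trans .inr ⟨label n, label_injective hn⟩))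
            (prodCongrHom _ _ (s, dihedralParity d)) *
          Perm.viaEmbeddingHom (.trans .inr (.trans .inr ⟨label n, label_injective hn⟩))
            (prodCongrHom _ _ (1, dihedralParity d))) := by
  rw [← viaEmbeddingHom_sumCongr, ← viaEmbeddingHom_sumCongr]
  rfl

theorem modelHom_g₂ : modelHom hn g₂ = t n 2 := by
  have hsquares : prodCongrHom (ZMod 4) Bool (dihedralPerm 4 (.sr 1), 1) =
      swap (0, false) (3, false) * swap (0, true) (3, true) *
        (swap (1, false) (2, false) * swap (1, true) (2, true)) := by decide
  have hpairs : prodCongrHom (Fin 4) Bool (swap 0 1, swap false true) =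
      swap (0, true) (1, false) * swap (0, false) (1, true) *
        (swap (2, false) (2, true) * swap (3, false) (3, true)) := by decide
  have htail := prodCongrHom_one_swap (List.nodup_finRange (n - 8)) List.mem_finRange
  have hparity : dihedralParity (.sr 1) = swap false true := by decide
  have hn' : n - 6 = n - 8 + 2 := by omega
  simp [g₂, modelHom_apply, hparity, hsquares, hpairs, htail, viaEmbeddingHom_swap, map_list_prod,
    Function.comp_def, label, squareVertex, t, hn', prod_map_range_add_two,
    mul_assoc, ← add_assoc]

theorem modelHom_g₃ : modelHom hn g₃ = t n 3 := by
  have hsquares : prodCongrHom (ZMod 4) Bool (dihedralPerm 4 (.sr 0), 1) =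
      swap (3, false) (1, false) * swap (3, true) (1, true) := by decide
  have hpairs : prodCongrHom (Fin 4) Bool (swap 1 2, 1) =
      swap (1, false) (2, false) * swap (1, true) (2, true) := by decide
  have hparity : dihedralParity (.sr 0) = 1 := by decide
  simp [g₃, modelHom_apply, hparity, hsquares, hpairs, ← Prod.one_eq_mk, viaEmbeddingHom_swap,
    label, squareVertex, t, mul_assoc]

theorem modelHom_g₄ : modelHom hn g₄ = t n 4 := by
  have hpairs : prodCongrHom (Fin 4) Bool (swap 2 3, 1) =
      swap (2, false) (3, false) * swap (2, true) (3, true) := by decide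
  simp [g₄, modelHom_apply, hpairs, ← Prod.one_eq_mk, viaEmbeddingHom_swap, label, t]

theorem closure_t_eq_range : closure {t n 2, t n 3, t n 4} = (modelHom hn).range := by
  rw [range_eq_map, ← closure_generators_eq_top, map_closure, Set.image_insert_eq, Set.image_pair,
    modelHom_g₂, modelHom_g₃, modelHom_g₄]

theorem closure_cubes_t_eq_map : closure {(t n 2 * t n 3) ^ 3, (t n 3 * t n 4) ^ 3} =
    (inl (DihedralGroup 4) (Perm (Fin 4))).range.map (modelHom hn) := by
  rw [← closure_cubes_eq_range_inl, map_closure, Set.image_pair]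
  simp only [map_pow, map_mul, modelHom_g₂, modelHom_g₃, modelHom_g₄]

theorem closure_square_t_eq_map : closure {(t n 2 * t n 3) ^ 2, t n 4} =
    ((center (DihedralGroup 4)).prod ⊤).map (modelHom hn) := by
  rw [← closure_square_eq_center_prod_top, map_closure, Set.image_pair]
  simp only [map_pow, map_mul, modelHom_g₂, modelHom_g₃, modelHom_g₄]

theorem nat_card_range_modelHom : Nat.card (modelHom hn).range = 192 := by
  rw [← Nat.card_congr (ofInjective (modelHom_injective hn)).toEquiv, Nat.card_prod,
    DihedralGroup.nat_card, Nat.card_perm, Nat.card_fin]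
  rfl

end Embedding

end H234

/-- For `n ≥ 8`, the subgroup `H = ⟨t₂,t₃,t₄⟩` of `Sym(2n)` has order
`2⁶·3 = 192`; the subgroup `R = ⟨(t₂t₃)³, (t₃t₄)³⟩` is a normal subgroup of
`H` isomorphic to the dihedral group of order `8`; and its centralizer in `H`
is `⟨(t₂t₃)², t₄⟩ ≅ ℤ₂ × Sym(4)`. -/
theorem H234_structure (n : ℕ) (hn : 8 ≤ n) :
    Nat.card (Subgroup.closure {t n 2, t n 3, t n 4} : Subgroup (Equiv.Perm ℕ)) = 192 ∧
    Subgroup.closure {(t n 2 * t n 3) ^ 3, (t n 3 * t n 4) ^ 3} ≤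
      Subgroup.closure {t n 2, t n 3, t n 4} ∧
    (∀ h ∈ Subgroup.closure {t n 2, t n 3, t n 4},
      ∀ r ∈ Subgroup.closure {(t n 2 * t n 3) ^ 3, (t n 3 * t n 4) ^ 3},
        h * r * h⁻¹ ∈ Subgroup.closure {(t n 2 * t n 3) ^ 3, (t n 3 * t n 4) ^ 3}) ∧
    Nonempty ((Subgroup.closure {(t n 2 * t n 3) ^ 3, (t n 3 * t n 4) ^ 3} :
      Subgroup (Equiv.Perm ℕ)) ≃* DihedralGroup 4) ∧
    Subgroup.centralizer
        (Subgroup.closure {(t n 2 * t n 3) ^ 3, (t n 3 * t n 4) ^ 3} : Subgroup (Equiv.Perm ℕ)) ⊓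
        Subgroup.closure {t n 2, t n 3, t n 4} =
      Subgroup.closure {(t n 2 * t n 3) ^ 2, t n 4} ∧
    Nonempty ((Subgroup.closure {(t n 2 * t n 3) ^ 2, t n 4} :
      Subgroup (Equiv.Perm ℕ)) ≃* (Multiplicative (ZMod 2) × Equiv.Perm (Fin 4))) := by
  have hf := H234.modelHom_injective hn
  rw [H234.closure_t_eq_range hn, H234.closure_cubes_t_eq_map hn, H234.closure_square_t_eq_map hn]
  refine ⟨H234.nat_card_range_modelHom hn, Subgroup.map_le_range _ _,
    fun h hh r hr => H234.conj_mem_map H234.normal_range_inl hh hr, ?_, ?_, ?_⟩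
  · have hinl : Function.Injective (MonoidHom.inl (DihedralGroup 4) (Perm (Fin 4))) :=
      fun _ _ => congrArg Prod.fst
    exact ⟨((MonoidHom.ofInjective hinl).trans (Subgroup.equivMapOfInjective _ _ hf)).symm⟩
  · rw [H234.centralizer_map_inf_range hf, H234.centralizer_range_inl]
  · exact H234.nonempty_center_prod_top_mulEquiv.map
      (Subgroup.equivMapOfInjective _ _ hf).symm.trans
end
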